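/- arXiv:1904.12829 — 16 statements merged into one kernel-verified Lean document; each statement's English description precedes it below -/
import Mathlib

section
/- Let C be a category satisfying the stated assumptions. Given monomorphisms b : B → D and c : C → D, let (p : A → B, q : A → C) be a pullback of the cospan (b, c) (so p and q are monomorphisms), let (e : B → U, f : C → U) be a pushout of the span (p, q), and let d : U → D be the unique morphism with d ∘ e = b and d ∘ f = c. Then d is a monomorphism (i.e. C has effective unions). -/
open CategoryTheory CategoryTheory.Limits

universe v u

/-- The ambient category possesses an epi-mono factorization. -/
def HasEpiMonoFact (𝒞 : Type u) [Category.{v} 𝒞] : Prop :=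
  ∀ {X Y : 𝒞} (f : X ⟶ Y), ∃ (Z : 𝒞) (e : X ⟶ Z) (m : Z ⟶ Y),
    Epi e ∧ Mono m ∧ e ≫ m = f

/-- The ambient category is finitary: every object has only finitely many subobjects. -/
def Finitary (𝒞 : Type u) [Category.{v} 𝒞] : Prop :=
  ∀ X : 𝒞, Finite (Subobject X)

/-- **Effective unions.** In an adhesive, finitary category with epi-mono factorization
and a strict initial object, given monomorphisms `b : B ⟶ D` and `c : Co ⟶ D`, the
pullback `(p, q)` of `(b, c)`, the pushout `(e, f)` of `(p, q)`, and the induced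
morphism `d : U ⟶ D`, the morphism `d` is a monomorphism. -/
theorem effective_unions
    {𝒞 : Type u} [Category.{v} 𝒞] [Adhesive 𝒞]
    [HasInitial 𝒞] [HasStrictInitialObjects 𝒞] [InitialMonoClass 𝒞]
    (hfact : HasEpiMonoFact 𝒞) (hfin : Finitary 𝒞)
    {A B Co D U : 𝒞}
    (b : B ⟶ D) (c : Co ⟶ D) [Mono b] [Mono c]
    (p : A ⟶ B) (q : A ⟶ Co) (hpb : IsPullback p q b c)
    (e : B ⟶ U) (f : Co ⟶ U) (hpo : IsPushout p q e f)
    (d : U ⟶ D) (hd1 : e ≫ d = b) (hd2 : f ≫ d = c) :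
    Mono d := by
  have h2 : IsPushout (pullback.fst b c) (pullback.snd b c) e f :=
    hpo.of_iso hpb.isoPullback (Iso.refl _) (Iso.refl _) (Iso.refl _)
      (by simp) (by simp) (by simp) (by simp)
  have h3 : d = h2.isoPushout.hom ≫ pushout.desc b c pullback.condition := by
    apply h2.hom_ext
    · simp only [hd1, IsPushout.inl_isoPushout_hom_assoc]
      exact (pushout.inl_desc _ _ _).symm
    · simp only [hd2, IsPushout.inr_isoPushout_hom_assoc]
      exact (pushout.inr_desc _ _ _).symm
  rw [h3]
  infer_instance
end

section
/- Let C be a category satisfying the stated assumptions. Suppose b1 : A → B1 and b2 : A → B2 are monomorphisms, (d1 : B1 → D, d2 : B2 → D) is a pushout of (b1, b2), e1 : B1 → E and e2 : B2 → E are monomorphisms such that (b1, b2) is a pullback of the cospan (e1, e2), and e : D → E is a morphism with e ∘ d1 = e1 and e ∘ d2 = e2. Then e is an epimorphism if and only if the exterior square is a pushout, i.e. if and only if (e1, e2) is a pushout of (b1, b2). -/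
open CategoryTheory CategoryTheory.Limits

universe v u

/-- **Characterization of epimorphisms via pushouts.** Given monomorphisms
`b1 : A ⟶ B1`, `b2 : A ⟶ B2`, a pushout `(d1, d2)` of `(b1, b2)`, monomorphisms
`e1 : B1 ⟶ E`, `e2 : B2 ⟶ E` such that `(b1, b2)` is a pullback of `(e1, e2)`, and a
morphism `e : D ⟶ E` with `d1 ≫ e = e1` and `d2 ≫ e = e2`, the morphism `e` is an
epimorphism if and only if the exterior square `(e1, e2)` is a pushout of `(b1, b2)`. -/
theorem epi_iff_exterior_pushout
    {𝒞 : Type u} [Category.{v} 𝒞] [Adhesive 𝒞]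
    [HasInitial 𝒞] [HasStrictInitialObjects 𝒞] [InitialMonoClass 𝒞]
    (hfact : HasEpiMonoFact 𝒞) (hfin : Finitary 𝒞)
    {A B1 B2 D E : 𝒞}
    (b1 : A ⟶ B1) (b2 : A ⟶ B2) [Mono b1] [Mono b2]
    (d1 : B1 ⟶ D) (d2 : B2 ⟶ D) (hpo : IsPushout b1 b2 d1 d2)
    (e1 : B1 ⟶ E) (e2 : B2 ⟶ E) [Mono e1] [Mono e2]
    (hpb : IsPullback b1 b2 e1 e2)
    (e : D ⟶ E) (h1 : d1 ≫ e = e1) (h2 : d2 ≫ e = e2) :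
    Epi e ↔ IsPushout b1 b2 e1 e2 := by
  have hpo' : IsPushout (pullback.fst e1 e2) (pullback.snd e1 e2) d1 d2 :=
    hpo.of_iso hpb.isoPullback (Iso.refl _) (Iso.refl _) (Iso.refl _)
      (by simp) (by simp) (by simp) (by simp)
  have hfac : e = hpo'.isoPushout.hom ≫ pushout.desc e1 e2 pullback.condition := by
    apply hpo'.hom_ext
    · simp only [h1, IsPushout.inl_isoPushout_hom_assoc]
      exact (pushout.inl_desc _ _ _).symm
    · simp only [h2, IsPushout.inr_isoPushout_hom_assoc]
      exact (pushout.inr_desc _ _ _).symm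
  have hm : Mono e := by
    rw [hfac]
    infer_instance
  constructor
  · intro he
    have : IsIso e := isIso_of_mono_of_epi e
    exact hpo.of_iso (Iso.refl _) (Iso.refl _) (Iso.refl _) (asIso e)
      (by simp) (by simp) (by simp [h1]) (by simp [h2])
  · intro H
    refine ⟨fun u v huv => H.hom_ext ?_ ?_⟩
    · rw [← h1, Category.assoc, Category.assoc, huv]
    · rw [← h2, Category.assoc, Category.assoc, huv]
end

section
/- Let C be a category satisfying the stated assumptions, and let all morphisms below be monomorphisms. If (b : A → D, d : D → X) is a final pullback complement of (c : B → X, a : A → B), and (b' : D → D', d' : D' → X') is a final pullback complement of (c' : X → X', d : D → X), then (b' ∘ b : A → D', d' : D' → X') is a final pullback complement of (c' ∘ c : B → X', a : A → B); i.e. vertical composition of FPC squares yields an FPC square. -/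
open CategoryTheory CategoryTheory.Limits

universe v u

/-- `(b : A ⟶ D, d : D ⟶ X)` is a final pullback complement (FPC) of
`(c : B ⟶ X, a : A ⟶ B)`. -/
def IsFPC {𝒞 : Type u} [Category.{v} 𝒞] {A B D X : 𝒞}
    (a : A ⟶ B) (c : B ⟶ X) (b : A ⟶ D) (d : D ⟶ X) : Prop :=
  IsPullback a b c d ∧
    ∀ ⦃P W : 𝒞⦄ (x : P ⟶ B) (y : P ⟶ W) (z : W ⟶ X), IsPullback x y c z →
      ∀ w : P ⟶ A, w ≫ a = x →
        ∃! ws : W ⟶ D, ws ≫ d = z ∧ y ≫ ws = w ≫ b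

/-- **Vertical composition of FPC squares.** For monomorphisms throughout, if
`(b, d)` is an FPC of `(c, a)` and `(b', d')` is an FPC of `(c', d)`, then
`(b ≫ b', d')` is an FPC of `(c ≫ c', a)`. -/
theorem fpc_vertical_pasting
    {𝒞 : Type u} [Category.{v} 𝒞] [Adhesive 𝒞]
    [HasInitial 𝒞] [HasStrictInitialObjects 𝒞] [InitialMonoClass 𝒞]
    (hfact : HasEpiMonoFact 𝒞) (hfin : Finitary 𝒞)
    {A B D X D' X' : 𝒞}
    (a : A ⟶ B) (c : B ⟶ X) (b : A ⟶ D) (d : D ⟶ X)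
    (c' : X ⟶ X') (b' : D ⟶ D') (d' : D' ⟶ X')
    [Mono a] [Mono c] [Mono b] [Mono d] [Mono c'] [Mono b'] [Mono d']
    (h1 : IsFPC a c b d) (h2 : IsFPC d c' b' d') :
    IsFPC a (c ≫ c') (b ≫ b') d' := by
  refine ⟨h1.1.paste_vert h2.1, ?_⟩
  intro P W x y z hp w hw
  have hq : IsPullback (pullback.fst c' z) (pullback.snd c' z) c' z := IsPullback.of_hasPullback c' z
  have hcomm : (x ≫ c) ≫ c' = y ≫ z := by simpa using hp.w
  have hl1 := hq.lift_fst (x ≫ c) y hcomm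
  have hl2 := hq.lift_snd (x ≫ c) y hcomm
  generalize hq.lift (x ≫ c) y hcomm = l at hl1 hl2
  have hp2 : IsPullback x (l ≫ pullback.snd c' z) (c ≫ c') z := by rw [hl2]; exact hp
  have hp1 : IsPullback x l c (pullback.fst c' z) := hp2.of_bot hl1.symm hq
  obtain ⟨w1, ⟨h11, h12⟩, -⟩ := h1.2 x l _ hp1 w hw
  obtain ⟨ws, ⟨h21, h22⟩, -⟩ := h2.2 _ _ z hq w1 h11
  refine ⟨ws, ⟨h21, ?_⟩, ?_⟩
  · rw [← hl2, Category.assoc, h22, reassoc_of% h12]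
  · rintro ws' ⟨h, -⟩
    rw [← cancel_mono d', h, h21]
end

section
/- Let C be a category satisfying the stated assumptions. If a : K → I is a monomorphism, k : K → D is a morphism, and (f : I → P, g : D → P) is a pushout of the span (a, k) (so that f ∘ a = g ∘ k is a pushout square along the monomorphism a), then (k : K → D, g : D → P) is a final pullback complement of (f : I → P, a : K → I); i.e. pushout squares along monomorphisms are final pullback complements. -/
open CategoryTheory CategoryTheory.Limits

universe v u

/-- **Pushout squares along monomorphisms are final pullback complements.** If
`a : K ⟶ I` is a monomorphism, `k : K ⟶ D` a morphism, and `(f : I ⟶ P, g : D ⟶ P)`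
is a pushout of `(a, k)`, then `(k, g)` is an FPC of `(f, a)`. -/
theorem pushout_along_mono_isFPC
    {𝒞 : Type u} [Category.{v} 𝒞] [Adhesive 𝒞]
    [HasInitial 𝒞] [HasStrictInitialObjects 𝒞] [InitialMonoClass 𝒞]
    (hfact : HasEpiMonoFact 𝒞) (hfin : Finitary 𝒞)
    {K I D P : 𝒞}
    (a : K ⟶ I) [Mono a] (k : K ⟶ D)
    (f : I ⟶ P) (g : D ⟶ P) (hpo : IsPushout a k f g) :
    IsFPC a f k g := by
  have hg : Mono g := Adhesive.mono_of_isPushout_of_mono_left hpo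
  refine ⟨Adhesive.isPullback_of_isPushout_of_mono_left hpo, ?_⟩
  intro Q W x y z hpb w hw
  haveI : HasPullback x a := hasPullback_symmetry a x
  haveI : HasPullback z g := hasPullback_symmetry g z
  obtain ⟨W', f', g', αW, h1, h2, h3⟩ :=
    (Adhesive.van_kampen hpo).exists_cube_filling hpb.flip (IsPullback.of_hasPullback z g)
  have hs : h1.lift (𝟙 Q) w (by simp [hw]) ≫ f' = 𝟙 Q := h1.lift_fst _ _ _
  have hm : Mono f' := ⟨fun u v huv => h1.hom_ext huv (by
    rw [← cancel_mono a, Category.assoc, Category.assoc, ← h1.w, reassoc_of% huv])⟩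
  have hiso : IsIso f' := ⟨_, by rw [← cancel_mono f', Category.assoc, hs]; simp, hs⟩
  have hi : IsIso (pullback.fst z g) := h3.isIso_inr_of_isIso
  have key : (inv (pullback.fst z g) ≫ pullback.snd z g) ≫ g = z := by
    rw [Category.assoc, ← pullback.condition, IsIso.inv_hom_id_assoc]
  refine ⟨inv (pullback.fst z g) ≫ pullback.snd z g, ⟨key, ?_⟩, ?_⟩
  · rw [← cancel_mono g, Category.assoc, key, Category.assoc, ← hpo.w, reassoc_of% hw, hpb.w]
  · rintro v ⟨hv, -⟩
    rw [← cancel_mono g, key, hv]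
end

section
/- Let C be a category satisfying the stated assumptions, and let a : K → I and c : I → X be monomorphisms with final pullback complement (b : K → D, d : D → X), where b and d are monomorphisms. Suppose further that u : D → D' is a monomorphism and (c' : X → X', d'' : D' → X') is a pushout of the span (d : D → X, u : D → D'). Then (u ∘ b : K → D', d'' : D' → X') is a final pullback complement of (c' ∘ c : I → X', a : K → I); i.e. vertically composing an FPC square with a pushout square along a monomorphism yields an FPC square. -/
open CategoryTheory CategoryTheory.Limits

universe v u

/-- **Vertically composing an FPC square with a pushout square along a monomorphism
yields an FPC square.** If `(b, d)` is an FPC of `(c, a)` (with `a`, `c`, `b`, `d`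
monomorphisms), `u : D ⟶ D'` is a monomorphism, and `(c' : X ⟶ X', d'' : D' ⟶ X')`
is a pushout of `(d, u)`, then `(b ≫ u, d'')` is an FPC of `(c ≫ c', a)`. -/
theorem fpc_comp_pushout_isFPC
    {𝒞 : Type u} [Category.{v} 𝒞] [Adhesive 𝒞]
    [HasInitial 𝒞] [HasStrictInitialObjects 𝒞] [InitialMonoClass 𝒞]
    (hfact : HasEpiMonoFact 𝒞) (hfin : Finitary 𝒞)
    {K I D X D' X' : 𝒞}
    (a : K ⟶ I) (c : I ⟶ X) [Mono a] [Mono c]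
    (b : K ⟶ D) (d : D ⟶ X) [Mono b] [Mono d]
    (hfpc : IsFPC a c b d)
    (u : D ⟶ D') [Mono u]
    (c' : X ⟶ X') (d'' : D' ⟶ X') (hpo : IsPushout d u c' d'') :
    IsFPC a (c ≫ c') (b ≫ u) d'' := by
  have hvk := Adhesive.van_kampen hpo
  have hpb := Adhesive.isPullback_of_isPushout_of_mono_left hpo
  have : Mono d'' := Adhesive.mono_of_isPushout_of_mono_left hpo
  have : Mono c' := Adhesive.mono_of_isPushout_of_mono_right hpo
  refine ⟨hfpc.1.paste_vert hpb, ?_⟩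
  intro P W x y z hxy w hw
  have hX := (IsPullback.of_hasPullback c' z).flip
  have hD := (IsPullback.of_hasPullback d'' z).flip
  have hc : (x ≫ c) ≫ c' = y ≫ z := by rw [Category.assoc]; exact hxy.w
  have hP : IsPullback x (pullback.lift (x ≫ c) y hc) c (pullback.fst c' z) := by
    refine IsPullback.of_bot ?_ (pullback.lift_fst _ _ _).symm hX.flip
    rw [pullback.lift_snd]
    exact hxy
  obtain ⟨s, ⟨hs, -⟩, -⟩ := hfpc.2 _ _ _ hP w hw
  have : HasPullback (pullback.fst c' z) d := hasPullback_symmetry _ _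
  obtain ⟨W', f', g', α, -, -, hpo'⟩ := hvk.exists_cube_filling hX hD
  have e : f' ≫ s ≫ u = g' ≫ pullback.fst d'' z := by
    rw [← cancel_mono d'']
    simp only [Category.assoc]
    rw [← hpo.w, reassoc_of% hs, pullback.condition, pullback.condition, ← Category.assoc,
      ← Category.assoc, hpo'.w]
  have hz : hpo'.desc (s ≫ u) (pullback.fst d'' z) e ≫ d'' = z := by
    apply hpo'.hom_ext
    · rw [hpo'.inl_desc_assoc, Category.assoc, ← hpo.w, reassoc_of% hs, pullback.condition]
    · rw [hpo'.inr_desc_assoc, pullback.condition]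
  refine ⟨hpo'.desc (s ≫ u) (pullback.fst d'' z) e, ⟨hz, ?_⟩, ?_⟩
  · rw [← cancel_mono d'', Category.assoc, hz, ← hxy.w, ← hw]
    simp only [Category.assoc]
    rw [← hpo.w, hfpc.1.w_assoc]
  · rintro t ⟨ht, -⟩
    rw [← cancel_mono d'', ht, hz]
end

section
/- (Concurrency theorem for DPO rewriting, synthesis direction, rules without application conditions.) Let C be a category satisfying the stated assumptions, let r1 = (O1 ←o1— K1 —i1→ I1) and r2 = (O2 ←o2— K2 —i2→ I2) be linear rules in C, let m1 : I1 → X0 be a DPO-admissible match with derivation X1 = (r1)_{m1}(X0) and comatch m1* : O1 → X1, and let m2 : I2 → X1 be a DPO-admissible match with derivation X2 = (r2)_{m2}(X1). Let M21 be the pullback of the cospan (m2 : I2 → X1, m1* : O1 → X1) and let μ21 = (I2 ← M21 → O1) be the induced span of monomorphisms. Then μ21 is a DPO-admissible match of r2 into r1, and there exists a DPO-admissible match m21 : I21 → X0 for the composite rule r21 = r2 ▷[μ21] r1 such that (r21)_{m21}(X0) is isomorphic to X2. -/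
open CategoryTheory CategoryTheory.Limits

universe v u

/-- A linear rule: a span `O ⟵o— K —i⟶ I` of monomorphisms. -/
structure Rule (𝒞 : Type u) [Category.{v} 𝒞] where
  O : 𝒞
  K : 𝒞
  I : 𝒞
  o : K ⟶ O
  i : K ⟶ I
  mono_o : Mono o
  mono_i : Mono i

/-- The data of a DPO direct derivation applying the linear rule `(O ⟵o— K —i⟶ I)`
to an object `X` along the match `m : I ⟶ X`: a pushout complement `(D, k, d)` for
`(i, m)` together with the pushout `Y` of `(o, k)`, with comatch `ms : O ⟶ Y`. -/
structure DerivData {𝒞 : Type u} [Category.{v} 𝒞] {O K I X : 𝒞}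
    (o : K ⟶ O) (i : K ⟶ I) (m : I ⟶ X) where
  D : 𝒞
  k : K ⟶ D
  d : D ⟶ X
  poc : IsPushout i k m d
  Y : 𝒞
  ms : O ⟶ Y
  ds : D ⟶ Y
  po : IsPushout o k ms ds

/-- The data witnessing that the span `μ21 = (I2 ⟵p2— M —p1⟶ O1)` of monomorphisms
is a DPO-admissible match of the rule `r2` into the rule `r1`, together with the
construction of the DPO composite rule `r2 ▷[μ21] r1`: the pushout `N` of `μ21`, a
pushout complement `K2b` for `(r2.i, n2)` with pushout `O21` of `(r2.o, k2)`, a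
pushout complement `K1b` for `(r1.o, n1)` with pushout `I21` of `(r1.i, k1)`, and the
pullback `K21` of `(w2, w1)`; the composite rule is the span of monomorphisms
`O21 ⟵ K21 ⟶ I21` with legs `q2 ≫ v2` and `q1 ≫ v1`. -/
structure CompData {𝒞 : Type u} [Category.{v} 𝒞] (r2 r1 : Rule 𝒞)
    (M : 𝒞) (p2 : M ⟶ r2.I) (p1 : M ⟶ r1.O) where
  mono_p2 : Mono p2
  mono_p1 : Mono p1
  N : 𝒞
  n2 : r2.I ⟶ N
  n1 : r1.O ⟶ N
  poN : IsPushout p2 p1 n2 n1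
  mono_n2 : Mono n2
  mono_n1 : Mono n1
  K2b : 𝒞
  k2 : r2.K ⟶ K2b
  w2 : K2b ⟶ N
  poc2 : IsPushout r2.i k2 n2 w2
  O21 : 𝒞
  c2 : r2.O ⟶ O21
  v2 : K2b ⟶ O21
  poO : IsPushout r2.o k2 c2 v2
  K1b : 𝒞
  k1 : r1.K ⟶ K1b
  w1 : K1b ⟶ N
  poc1 : IsPushout r1.o k1 n1 w1
  I21 : 𝒞
  c1 : r1.I ⟶ I21
  v1 : K1b ⟶ I21
  poI : IsPushout r1.i k1 c1 v1
  K21 : 𝒞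
  q2 : K21 ⟶ K2b
  q1 : K21 ⟶ K1b
  pbK : IsPullback q2 q1 w2 w1
  mono_oleg : Mono (q2 ≫ v2)
  mono_ileg : Mono (q1 ≫ v1)

/-- The DPO composite rule `r2 ▷[μ21] r1` extracted from composition data. -/
def CompData.rule {𝒞 : Type u} [Category.{v} 𝒞] {r2 r1 : Rule 𝒞}
    {M : 𝒞} {p2 : M ⟶ r2.I} {p1 : M ⟶ r1.O}
    (cd : CompData r2 r1 M p2 p1) : Rule 𝒞 :=
  ⟨cd.O21, cd.K21, cd.I21, cd.q2 ≫ cd.v2, cd.q1 ≫ cd.v1, cd.mono_oleg, cd.mono_ileg⟩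

/-- Two linear rules are isomorphic as spans. -/
def RuleIso {𝒞 : Type u} [Category.{v} 𝒞] (r r' : Rule 𝒞) : Prop :=
  ∃ (φO : r.O ≅ r'.O) (φK : r.K ≅ r'.K) (φI : r.I ≅ r'.I),
    r.o ≫ φO.hom = φK.hom ≫ r'.o ∧ r.i ≫ φI.hom = φK.hom ≫ r'.i

theorem pb_mono_fst {𝒞 : Type u} [Category.{v} 𝒞] {P X Y Z : 𝒞} {a : P ⟶ X} {b : P ⟶ Y}
    {f : X ⟶ Z} {g : Y ⟶ Z} (H : IsPullback a b f g) [Mono g] : Mono a :=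
  ⟨fun x y h => H.hom_ext h (by
    rw [← cancel_mono g, Category.assoc, Category.assoc, ← H.w, reassoc_of% h])⟩

/-- Stability of pushouts along monos under pullback. -/
theorem po_stable {𝒞 : Type u} [Category.{v} 𝒞] [Adhesive 𝒞]
    {W X Y Z : 𝒞} {f : W ⟶ X} {g : W ⟶ Y} {h : X ⟶ Z} {i : Y ⟶ Z} [Mono f]
    (H : IsPushout f g h i)
    {W' X' Y' Z' : 𝒞} {f' : W' ⟶ X'} {g' : W' ⟶ Y'} {h' : X' ⟶ Z'} {i' : Y' ⟶ Z'}
    {αW : W' ⟶ W} {αX : X' ⟶ X} {αY : Y' ⟶ Y} {αZ : Z' ⟶ Z}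
    (hf : IsPullback f' αW αX f) (hh : IsPullback h' αX αZ h) (hi : IsPullback i' αY αZ i)
    (w : f' ≫ h' = g' ≫ i') (wg : g' ≫ αY = αW ≫ g) : IsPushout f' g' h' i' := by
  refine (Adhesive.van_kampen H f' g' h' i' αW αX αY αZ hf ?_ hh.toCommSq hi.toCommSq ⟨w⟩).2
    ⟨hh, hi⟩
  refine IsPullback.of_right ?_ wg hi
  rw [← w, ← H.w]
  exact hf.paste_horiz hh

/-- Restricting a pushout along a mono `n` through which one leg factors. -/
theorem po_restrict {𝒞 : Type u} [Category.{v} 𝒞] [Adhesive 𝒞]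
    {K I D X N : 𝒞} {i : K ⟶ I} {k : K ⟶ D} {m : I ⟶ X} {d : D ⟶ X} [Mono i]
    (H : IsPushout i k m d) (n2 : I ⟶ N) (n : N ⟶ X) [Mono n] (hm : n2 ≫ n = m) :
    ∃ (B : 𝒞) (b : K ⟶ B) (w : B ⟶ N) (j : B ⟶ D), IsPullback w j n d ∧
      b ≫ j = k ∧ IsPushout i b n2 w ∧ IsPushout w j n d := by
  have hP := IsPullback.of_hasPullback n d
  have hw : (i ≫ n2) ≫ n = k ≫ d := by rw [Category.assoc, hm, H.w]
  have h1 : IsPushout i (hP.lift (i ≫ n2) k hw) n2 (pullback.fst n d) := by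
    refine po_stable (αW := 𝟙 _) (αX := 𝟙 _) (αY := pullback.snd n d) (αZ := n) H
      (IsPullback.of_vert_isIso ⟨by simp⟩) ?_ hP (by simp) (by simp)
    refine ⟨⟨by simp [hm]⟩, ⟨PullbackCone.IsLimit.mk _ (fun s => s.snd) ?_ ?_ ?_⟩⟩
    · intro s
      rw [← cancel_mono n, Category.assoc, hm, s.condition]
    · intro s; simp
    · intro s t _ h2; simpa using h2
  refine ⟨_, hP.lift (i ≫ n2) k hw, pullback.fst n d, pullback.snd n d, hP, by simp, h1, ?_⟩
  refine (IsPushout.of_left ?_ pullback.condition.symm h1.flip).flip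
  simpa [hm] using H.flip

/-- Extending a pushout. -/
theorem po_extend {𝒞 : Type u} [Category.{v} 𝒞] [Adhesive 𝒞]
    {K I D X B J : 𝒞} {i : K ⟶ I} {k : K ⟶ D} {m : I ⟶ X} {d : D ⟶ X}
    (H : IsPushout i k m d) {b : K ⟶ B} {j : B ⟶ D} (hb : b ≫ j = k)
    {c : I ⟶ J} {v' : B ⟶ J} (hJ : IsPushout i b c v') :
    ∃ x : J ⟶ X, IsPushout v' j x d := by
  subst hb
  have hw : i ≫ m = b ≫ j ≫ d := by rw [H.w, Category.assoc]
  refine ⟨hJ.desc m (j ≫ d) hw, ?_⟩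
  refine (IsPushout.of_left (h₁₁ := b) (v₁₁ := i) (h₂₁ := c) ?_ (by simp) hJ.flip).flip
  simpa using H.flip

/-- **Concurrency theorem (synthesis direction, DPO, rules without conditions).** -/
theorem dpo_concurrency_synthesis
    {𝒞 : Type u} [Category.{v} 𝒞] [Adhesive 𝒞]
    [HasInitial 𝒞] [HasStrictInitialObjects 𝒞] [InitialMonoClass 𝒞]
    (hfact : HasEpiMonoFact 𝒞) (hfin : Finitary 𝒞)
    (r1 r2 : Rule 𝒞)
    {X0 : 𝒞} (m1 : r1.I ⟶ X0) [Mono m1] (d1 : DerivData r1.o r1.i m1)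
    (m2 : r2.I ⟶ d1.Y) [Mono m2] (d2 : DerivData r2.o r2.i m2)
    {M21 : 𝒞} (p2 : M21 ⟶ r2.I) (p1 : M21 ⟶ r1.O)
    (hpb : IsPullback p2 p1 m2 d1.ms) :
    ∃ (cd : CompData r2 r1 M21 p2 p1) (m21 : cd.I21 ⟶ X0),
      Mono m21 ∧
        ∃ dd : DerivData (cd.q2 ≫ cd.v2) (cd.q1 ≫ cd.v1) m21,
          Nonempty (dd.Y ≅ d2.Y) := by
  have := r1.mono_o
  have := r1.mono_i
  have := r2.mono_o
  have := r2.mono_i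
  have hk1 : Mono d1.k := by
    have hp := Adhesive.isPullback_of_isPushout_of_mono_left d1.poc
    exact ⟨fun a b h => by
      have h3 : (a ≫ r1.i) ≫ m1 = (b ≫ r1.i) ≫ m1 := by
        rw [Category.assoc, Category.assoc, d1.poc.w, reassoc_of% h]
      rwa [cancel_mono, cancel_mono] at h3⟩
  have hms : Mono d1.ms := Adhesive.mono_of_isPushout_of_mono_right d1.po
  have hp2 : Mono p2 := pb_mono_fst hpb
  have hp1 : Mono p1 := pb_mono_fst hpb.flip
  have poN : IsPushout p2 p1 (pushout.inl (pullback.fst m2 d1.ms) (pullback.snd m2 d1.ms))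
      (pushout.inr (pullback.fst m2 d1.ms) (pullback.snd m2 d1.ms)) :=
    (IsPushout.of_hasPushout (pullback.fst m2 d1.ms) (pullback.snd m2 d1.ms)).of_iso
      hpb.isoPullback.symm (Iso.refl _) (Iso.refl _) (Iso.refl _) (by simp) (by simp)
      (by simp) (by simp)
  have hn : Mono (pushout.desc m2 d1.ms pullback.condition) := Adhesive.desc_mono_of_mono
  have e2 : pushout.inl (pullback.fst m2 d1.ms) (pullback.snd m2 d1.ms) ≫
      pushout.desc m2 d1.ms pullback.condition = m2 := pushout.inl_desc _ _ _
  have e1 : pushout.inr (pullback.fst m2 d1.ms) (pullback.snd m2 d1.ms) ≫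
      pushout.desc m2 d1.ms pullback.condition = d1.ms := pushout.inr_desc _ _ _
  generalize pushout.desc m2 d1.ms pullback.condition = n at *
  generalize pushout.inl (pullback.fst m2 d1.ms) (pullback.snd m2 d1.ms) = n2 at *
  generalize pushout.inr (pullback.fst m2 d1.ms) (pullback.snd m2 d1.ms) = n1 at *
  generalize pushout (pullback.fst m2 d1.ms) (pullback.snd m2 d1.ms) = N at *
  obtain ⟨K2b, k2, w2, j2, hP2, hkj2, poc2, poX2⟩ := po_restrict d2.poc n2 n e2
  obtain ⟨K1b, k1, w1, j1, hP1, hkj1, poc1, poX1⟩ := po_restrict d1.po n1 n e1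
  have hw2 : Mono w2 := Adhesive.mono_of_isPushout_of_mono_left poc2
  have hw1 : Mono w1 := Adhesive.mono_of_isPushout_of_mono_left poc1
  have hds : Mono d1.ds := Adhesive.mono_of_isPushout_of_mono_left d1.po
  have hj1 : Mono j1 := pb_mono_fst hP1.flip
  have poO := IsPushout.of_hasPushout r2.o k2
  have poI := IsPushout.of_hasPushout r1.i k1
  have hv2 := Adhesive.mono_of_isPushout_of_mono_left poO
  have hv1 := Adhesive.mono_of_isPushout_of_mono_left poI
  obtain ⟨x2, hx2⟩ := po_extend d2.po hkj2 poO
  obtain ⟨m21, hm21⟩ := po_extend d1.poc hkj1 poI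
  have hd : Mono d2.d := Adhesive.mono_of_isPushout_of_mono_left d2.poc
  have pbK := IsPullback.of_hasPullback w2 w1
  have pbD := IsPullback.of_hasPullback d2.d d1.ds
  have hq2 := pb_mono_fst pbK
  have hq1 := pb_mono_fst pbK.flip
  have ht : (pullback.fst w2 w1 ≫ j2) ≫ d2.d = (pullback.snd w2 w1 ≫ j1) ≫ d1.ds := by
    rw [Category.assoc, Category.assoc, ← hP2.w, ← hP1.w, pullback.condition_assoc]
  have poA : IsPushout (pullback.snd w2 w1) (pbD.lift _ _ ht) j1 (pullback.snd d2.d d1.ds) :=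
    po_stable poX2 pbK.flip hP1.flip pbD.flip (by simp) (by simp)
  have poB : IsPushout (pullback.fst w2 w1) (pbD.lift _ _ ht) j2 (pullback.fst d2.d d1.ds) :=
    po_stable poX1 pbK hP2.flip pbD (by simp) (by simp)
  let cd : CompData r2 r1 M21 p2 p1 :=
    { mono_p2 := hp2, mono_p1 := hp1, N := N, n2 := n2, n1 := n1, poN := poN
      mono_n2 := Adhesive.mono_of_isPushout_of_mono_right poN
      mono_n1 := Adhesive.mono_of_isPushout_of_mono_left poN
      K2b := K2b, k2 := k2, w2 := w2, poc2 := poc2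
      O21 := _, c2 := _, v2 := _, poO := poO
      K1b := K1b, k1 := k1, w1 := w1, poc1 := poc1
      I21 := _, c1 := _, v1 := _, poI := poI
      K21 := _, q2 := _, q1 := _, pbK := pbK
      mono_oleg := mono_comp _ _
      mono_ileg := mono_comp _ _ }
  refine ⟨cd, m21, Adhesive.mono_of_isPushout_of_mono_right hm21, ?_⟩
  exact ⟨{ D := _, k := _, d := _, poc := (poA.flip.paste_vert hm21.flip).flip
           Y := d2.Y, ms := x2, ds := _, po := (poB.flip.paste_vert hx2.flip).flip }, ⟨Iso.refl _⟩⟩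
end

section
/- (Concurrency theorem for DPO rewriting, analysis direction, rules without application conditions.) Let C be a category satisfying the stated assumptions, let r1 and r2 be linear rules in C, let μ21 = (I2 ← M21 → O1) be a DPO-admissible match of r2 into r1 with composite rule r21 = r2 ▷[μ21] r1 (a span from O21 to I21), and let m21 : I21 → X0 be a DPO-admissible match for r21. Then there exist a DPO-admissible match m1 : I1 → X0 for r1 and a DPO-admissible match m2 : I2 → X1 for r2, where X1 = (r1)_{m1}(X0), such that (r2)_{m2}(X1) is isomorphic to (r21)_{m21}(X0). -/
open CategoryTheory CategoryTheory.Limits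

universe v u

theorem dpo_split {𝒞 : Type u} [Category.{v} 𝒞] {A B C D E X : 𝒞}
    {a : A ⟶ B} {k : A ⟶ D} {e : B ⟶ E} {b : D ⟶ E} {c : B ⟶ C} {m : C ⟶ X} {d : D ⟶ X}
    (h : IsPushout a k e b) (H : IsPushout (a ≫ c) k m d) :
    ∃ x : E ⟶ X, IsPushout c e m x := by
  refine ⟨h.desc (c ≫ m) d (by simpa using H.w), ?_⟩
  refine IsPushout.of_left (h₂₁ := b) ?_ (by simp) h
  simpa using H

/-- **Concurrency theorem (analysis direction, DPO, rules without conditions).**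
Given a DPO-admissible match `μ21` of `r2` into `r1` with composite rule
`r21 = r2 ▷[μ21] r1` and a DPO-admissible match `m21 : I21 ⟶ X0` for `r21`, there
exist a DPO-admissible match `m1` for `r1` and a DPO-admissible match `m2` for `r2`
applied to `X1 = (r1)_{m1}(X0)` such that `(r2)_{m2}(X1) ≅ (r21)_{m21}(X0)`. -/
theorem dpo_concurrency_analysis
    {𝒞 : Type u} [Category.{v} 𝒞] [Adhesive 𝒞]
    [HasInitial 𝒞] [HasStrictInitialObjects 𝒞] [InitialMonoClass 𝒞]
    (hfact : HasEpiMonoFact 𝒞) (hfin : Finitary 𝒞)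
    (r1 r2 : Rule 𝒞)
    {M : 𝒞} {p2 : M ⟶ r2.I} {p1 : M ⟶ r1.O}
    (cd : CompData r2 r1 M p2 p1)
    {X0 : 𝒞} (m21 : cd.I21 ⟶ X0) [Mono m21]
    (dd : DerivData (cd.q2 ≫ cd.v2) (cd.q1 ≫ cd.v1) m21) :
    ∃ (m1 : r1.I ⟶ X0), Mono m1 ∧
      ∃ (d1 : DerivData r1.o r1.i m1) (m2 : r2.I ⟶ d1.Y), Mono m2 ∧
        ∃ d2 : DerivData r2.o r2.i m2, Nonempty (d2.Y ≅ dd.Y) := by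
  obtain ⟨D, k, d, poc, Y, ms, ds, po⟩ := dd
  have := r1.mono_o
  have := r1.mono_i
  have := r2.mono_o
  have := r2.mono_i
  have := cd.mono_n1
  have := cd.mono_n2
  have := cd.mono_ileg
  have hw1 : Mono cd.w1 := Adhesive.mono_of_isPushout_of_mono_left cd.poc1
  have hw2 : Mono cd.w2 := Adhesive.mono_of_isPushout_of_mono_left cd.poc2
  have hq1 : Mono cd.q1 := mono_of_mono cd.q1 cd.v1
  have hq2 : Mono cd.q2 := by
    have := cd.mono_oleg
    exact mono_of_mono cd.q2 cd.v2
  have hk : Mono k := by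
    have h := Adhesive.isPullback_of_isPushout_of_mono_left poc
    exact ⟨fun f g w => h.hom_ext (by
      rw [← cancel_mono m21, Category.assoc f, Category.assoc g, h.w, reassoc_of% w]) w⟩
  have hk1 : Mono cd.k1 := by
    have h := Adhesive.isPullback_of_isPushout_of_mono_left cd.poc1
    exact ⟨fun f g w => h.hom_ext (by
      rw [← cancel_mono cd.n1, Category.assoc, Category.assoc, h.w, reassoc_of% w]) w⟩
  have hc1 : Mono cd.c1 := Adhesive.mono_of_isPushout_of_mono_right cd.poI
  have P1 := IsPushout.of_hasPushout cd.q1 k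
  have P2 := IsPushout.of_hasPushout cd.q2 k
  have he1 : Mono (pushout.inl cd.q1 k) := Adhesive.mono_of_isPushout_of_mono_right P1
  obtain ⟨x0, hx0⟩ := dpo_split P1 poc
  have Q := IsPushout.of_hasPushout cd.w1 (pushout.inl cd.q1 k)
  have hn := Adhesive.mono_of_isPushout_of_mono_right Q
  have R := P1.paste_horiz Q
  rw [← cd.pbK.w] at R
  obtain ⟨x1, hx1⟩ := dpo_split P2 R
  obtain ⟨y, hy⟩ := dpo_split P2 po
  refine ⟨cd.c1 ≫ m21, mono_comp _ _,
    ⟨_, _, _, cd.poI.paste_vert hx0, _, _, _, cd.poc1.paste_vert Q⟩,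
    cd.n2 ≫ pushout.inl _ _, mono_comp _ _,
    ⟨_, _, _, cd.poc2.paste_vert hx1, _, _, _, cd.poO.paste_vert hy⟩, ⟨Iso.refl _⟩⟩
end

section
/- (Associativity of DPO rule composition, first direction, rules without application conditions.) Let C be a category satisfying the stated assumptions, and let r1, r2, r3 be linear rules in C. If μ21 is a DPO-admissible match of r2 into r1 with composite r21 = r2 ▷[μ21] r1, and μ3(21) is a DPO-admissible match of r3 into r21, then there exist a DPO-admissible match μ32 of r3 into r2 and a DPO-admissible match μ(32)1 of r32 := r3 ▷[μ32] r2 into r1 such that the composite rules r3 ▷[μ3(21)] (r2 ▷[μ21] r1) and (r3 ▷[μ32] r2) ▷[μ(32)1] r1 are isomorphic as spans. -/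
open CategoryTheory CategoryTheory.Limits

universe v u

section Helpers

variable {𝒞 : Type u} [Category.{v} 𝒞]

theorem dpoaux_po [Adhesive 𝒞] {A B D : 𝒞} (f : A ⟶ B) (g : A ⟶ D) [Mono f] :
    ∃ (P : 𝒞) (a : B ⟶ P) (b : D ⟶ P), IsPushout f g a b :=
  ⟨_, _, _, IsPushout.of_hasPushout f g⟩

theorem dpoaux_pb [Adhesive 𝒞] {A B D : 𝒞} (f : B ⟶ A) (g : D ⟶ A) [Mono f] :
    ∃ (P : 𝒞) (a : P ⟶ B) (b : P ⟶ D), IsPullback a b f g :=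
  ⟨_, _, _, IsPullback.of_hasPullback f g⟩

theorem dpoaux_mono_snd {P A B D : 𝒞} {a : P ⟶ B} {b : P ⟶ D} {f : B ⟶ A} {g : D ⟶ A}
    (h : IsPullback a b f g) [Mono f] : Mono b := by
  constructor
  intro Z x y e
  apply h.hom_ext _ e
  rw [← cancel_mono f, Category.assoc, Category.assoc, h.w, reassoc_of% e]

theorem dpoaux_mono_fst {P A B D : 𝒞} {a : P ⟶ B} {b : P ⟶ D} {f : B ⟶ A} {g : D ⟶ A}
    (h : IsPullback a b f g) [Mono g] : Mono a := dpoaux_mono_snd h.flip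

theorem dpoaux_split {X₁₁ X₁₂ X₁₃ X₂₁ X₂₂ X₂₃ : 𝒞} {h₁₁ : X₁₁ ⟶ X₁₂} {h₁₂ : X₁₂ ⟶ X₁₃}
    {h₂₁ : X₂₁ ⟶ X₂₂} {h₂₃ : X₂₁ ⟶ X₂₃} {v₁₁ : X₁₁ ⟶ X₂₁} {v₁₂ : X₁₂ ⟶ X₂₂} {v₁₃ : X₁₃ ⟶ X₂₃}
    (s : IsPushout (h₁₁ ≫ h₁₂) v₁₁ v₁₃ h₂₃) (t : IsPushout h₁₁ v₁₁ v₁₂ h₂₁) :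
    ∃ d : X₂₂ ⟶ X₂₃, h₂₁ ≫ d = h₂₃ ∧ IsPushout h₁₂ v₁₂ v₁₃ d :=
  ⟨_, by simp, IsPushout.of_left' s t⟩

theorem dpoaux_stab [Adhesive 𝒞] {W X Y Z W' X' Y' Z' : 𝒞} {f : W ⟶ X} {g : W ⟶ Y}
    {h : X ⟶ Z} {i : Y ⟶ Z} [Mono f] (H : IsPushout f g h i)
    {f' : W' ⟶ X'} {g' : W' ⟶ Y'} {h' : X' ⟶ Z'} {i' : Y' ⟶ Z'} {αW : W' ⟶ W}
    {αX : X' ⟶ X} {αY : Y' ⟶ Y} {αZ : Z' ⟶ Z}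
    (hh : IsPullback h' αX αZ h) (hi : IsPullback i' αY αZ i) (hf : IsPullback f' αW αX f)
    (w : f' ≫ h' = g' ≫ i') (wg : g' ≫ αY = αW ≫ g) : IsPushout f' g' h' i' := by
  refine (Adhesive.van_kampen H f' g' h' i' αW αX αY αZ hf ?_ ⟨hh.w⟩ ⟨hi.w⟩ ⟨w⟩).2 ⟨hh, hi⟩
  refine IsPullback.of_right ?_ wg hi
  rw [← H.w, ← w]
  exact hf.paste_horiz hh

theorem dpoaux_restrict [Adhesive 𝒞] {W X Y Z Z' : 𝒞} {f : W ⟶ X} {g : W ⟶ Y}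
    {h : X ⟶ Z} {i : Y ⟶ Z} [Mono f] (H : IsPushout f g h i) (t : X ⟶ Z') (m : Z' ⟶ Z) [Mono m]
    (ht : t ≫ m = h) :
    ∃ (Y' : 𝒞) (g' : W ⟶ Y') (i' : Y' ⟶ Z') (s : Y' ⟶ Y),
      IsPullback i' s m i ∧ g' ≫ s = g ∧ IsPushout f g' t i' ∧ IsPushout i' s m i := by
  obtain ⟨Y', i', s, hp⟩ := dpoaux_pb m i
  have e : (f ≫ t) ≫ m = g ≫ i := by rw [Category.assoc, ht, H.w]
  have e1 : hp.lift (f ≫ t) g e ≫ i' = f ≫ t := by simp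
  have e2 : hp.lift (f ≫ t) g e ≫ s = g := by simp
  generalize hp.lift (f ≫ t) g e = g' at e1 e2
  have hX : IsPullback t (𝟙 X) m h := by
    refine ⟨⟨by simp [ht]⟩, ⟨PullbackCone.IsLimit.mk _ (fun c => c.snd) ?_ ?_ ?_⟩⟩
    · intro c
      rw [← cancel_mono m, Category.assoc, ht, c.condition]
    · intro c; simp
    · intro c k _ h2; simpa using h2
  have hW : IsPullback f (𝟙 W) (𝟙 X) f := IsPullback.of_vert_isIso ⟨by simp⟩
  have P : IsPushout f g' t i' :=
    dpoaux_stab H (αW := 𝟙 W) hX hp hW e1.symm (by simp [e2])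
  refine ⟨Y', g', i', s, hp, e2, P, ?_⟩
  refine (IsPushout.of_top (h₁₁ := f) (v₁₁ := g') (v₁₂ := t) (h₂₁ := i') (v₂₁ := s) (v₂₂ := m)
    (h₃₁ := i) ?_ hp.w P)
  rw [e2, ht]; exact H

theorem dpoaux_fac {W X Y Z T J : 𝒞} {f : W ⟶ X} {g : W ⟶ Y}
    {h : X ⟶ Z} {i : Y ⟶ Z} (H : IsPushout f g h i) (m : J ⟶ T) [Mono m] (t : Z ⟶ T)
    (hx : ∃ l, l ≫ m = h ≫ t) (hy : ∃ l, l ≫ m = i ≫ t) : ∃ l, l ≫ m = t := by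
  obtain ⟨a, ha⟩ := hx
  obtain ⟨b, hb⟩ := hy
  have e : f ≫ a = g ≫ b := by
    rw [← cancel_mono m, Category.assoc, Category.assoc, ha, hb, H.w_assoc]
  refine ⟨H.desc a b e, ?_⟩
  apply H.hom_ext
  · simp [ha]
  · simp [hb]

theorem dpoaux_union [Adhesive 𝒞] {A B D : 𝒞} (f : B ⟶ A) (g : D ⟶ A) [Mono f] [Mono g] :
    ∃ (P : 𝒞) (a : P ⟶ B) (b : P ⟶ D) (J : 𝒞) (l : B ⟶ J) (r : D ⟶ J) (m : J ⟶ A),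
      IsPullback a b f g ∧ IsPushout a b l r ∧ Mono m ∧ l ≫ m = f ∧ r ≫ m = g :=
  ⟨_, _, _, _, _, _, pushout.desc f g pullback.condition, IsPullback.of_hasPullback f g,
    IsPushout.of_hasPushout _ _, inferInstance, pushout.inl_desc _ _ _, pushout.inr_desc _ _ _⟩

end Helpers

/-- **Associativity of DPO rule composition (first direction).** If `μ21` is a
DPO-admissible match of `r2` into `r1` with composite `r21 = r2 ▷[μ21] r1`, and
`μ3(21)` is a DPO-admissible match of `r3` into `r21`, then there exist a
DPO-admissible match `μ32` of `r3` into `r2` and a DPO-admissible match `μ(32)1` of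
`r32 = r3 ▷[μ32] r2` into `r1` such that `r3 ▷[μ3(21)] (r2 ▷[μ21] r1)` and
`(r3 ▷[μ32] r2) ▷[μ(32)1] r1` are isomorphic as spans. -/
theorem dpo_composition_assoc_left_to_right
    {𝒞 : Type u} [Category.{v} 𝒞] [Adhesive 𝒞]
    [HasInitial 𝒞] [HasStrictInitialObjects 𝒞] [InitialMonoClass 𝒞]
    (hfact : HasEpiMonoFact 𝒞) (hfin : Finitary 𝒞)
    (r1 r2 r3 : Rule 𝒞)
    {M21 : 𝒞} {p2 : M21 ⟶ r2.I} {p1 : M21 ⟶ r1.O}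
    (c21 : CompData r2 r1 M21 p2 p1)
    {M3 : 𝒞} {p3 : M3 ⟶ r3.I} {p21 : M3 ⟶ (c21.rule).O}
    (c321 : CompData r3 c21.rule M3 p3 p21) :
    ∃ (M32 : 𝒞) (q3 : M32 ⟶ r3.I) (q2 : M32 ⟶ r2.O)
      (c32 : CompData r3 r2 M32 q3 q2)
      (M' : 𝒞) (s32 : M' ⟶ (c32.rule).I) (s1 : M' ⟶ r1.O)
      (cfin : CompData c32.rule r1 M' s32 s1),
      RuleIso c321.rule cfin.rule := by
  have m1o : Mono r1.o := r1.mono_o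
  have m1i : Mono r1.i := r1.mono_i
  have m2o : Mono r2.o := r2.mono_o
  have m2i : Mono r2.i := r2.mono_i
  have m3o : Mono r3.o := r3.mono_o
  have m3i : Mono r3.i := r3.mono_i
  obtain ⟨mp2, mp1, N21, n2, n1, poN, mn2, mn1, K2b, k2, w2, poc2, O21, c2, v2, poO, K1b, k1, w1,
    poc1, I21, c1, v1, poI, K21, q2, q1, pbK, mol, mil⟩ := c21
  obtain ⟨mp3, mp21, N3, m3, m21, poN3, mm3, mm21, K3b, k3, w3, poc3, O321, c3, v3, poO3, K21b,
    k21, w21, poc21, I321, c21', v21, poI3, K321, t3, t21, pbK3, mol3, mil3⟩ := c321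
  simp only [CompData.rule] at p21 m21 poN3 mm21 k21 poc21 c21' poI3
  have mw2 : Mono w2 := Adhesive.mono_of_isPushout_of_mono_left poc2
  have mv2 : Mono v2 := Adhesive.mono_of_isPushout_of_mono_left poO
  have mw1 : Mono w1 := Adhesive.mono_of_isPushout_of_mono_left poc1
  have mq2 : Mono q2 := mono_of_mono q2 v2
  have mq1 : Mono q1 := mono_of_mono q1 v1
  have mc2 : Mono c2 := by
    have : Mono k2 := by
      have : Mono (k2 ≫ w2) := by rw [← poc2.w]; infer_instance
      exact mono_of_mono k2 w2
    exact Adhesive.mono_of_isPushout_of_mono_right poO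
  have mw3 : Mono w3 := Adhesive.mono_of_isPushout_of_mono_left poc3
  -- D2 and D1
  obtain ⟨D2, a, b, hD2⟩ := dpoaux_po q2 k21
  obtain ⟨D1, a1, b1, hD1⟩ := dpoaux_po q1 k21
  obtain ⟨d2, hd2, hN3⟩ := dpoaux_split poc21 hD2
  have hN3' := poO.paste_vert hN3
  obtain ⟨d1, hd1, hI3⟩ := dpoaux_split poI3 hD1
  have hI3' := poI.paste_vert hI3
  have md2 : Mono d2 := Adhesive.mono_of_isPushout_of_mono_left hN3
  obtain ⟨X2, x, y, hX2⟩ := dpoaux_po w2 a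
  have hX2' := poc2.paste_vert hX2
  have hXK := hD2.paste_horiz hX2
  rw [pbK.w] at hXK
  obtain ⟨z, hz, hX1⟩ := dpoaux_split hXK hD1
  have hX1' := poc1.paste_vert hX1
  have mx : Mono x := by
    have : Mono k21 := by
      have : Mono (k21 ≫ w21) := by rw [← poc21.w]; exact mono_comp _ _
      exact mono_of_mono k21 w21
    have : Mono a := Adhesive.mono_of_isPushout_of_mono_right hD2
    exact Adhesive.mono_of_isPushout_of_mono_right hX2
  have hpbD : IsPullback b1 b z y :=
    ((Adhesive.van_kampen hX2 q1 k21 a1 b1 q2 w1 b z pbK.flip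
      (Adhesive.isPullback_of_isPushout_of_mono_left hD2).flip ⟨hX1.w.symm⟩ ⟨hz⟩ ⟨hD1.w⟩).1 hD1).2
  -- M32 and N32
  have mcm : Mono (c2 ≫ m21) := mono_comp _ _
  obtain ⟨M32, μ3, μ2, N32, t3', t2', u, hM32, hN32, mu, hu3, hu2⟩ := dpoaux_union m3 (c2 ≫ m21)
  have mμ3 : Mono μ3 := dpoaux_mono_fst hM32
  have mμ2 : Mono μ2 := dpoaux_mono_snd hM32
  obtain ⟨K3b', k3', j3, s3, hK3p, hk3', hK3N, hK3u⟩ := dpoaux_restrict poc3 t3' u hu3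
  obtain ⟨D2', g2', j2, s2, hD2p, hg2', hD2N, hD2u⟩ := dpoaux_restrict hN3' t2' u hu2
  have mj3 : Mono j3 := dpoaux_mono_fst hK3p
  have mj2 : Mono j2 := dpoaux_mono_fst hD2p
  have ms3 : Mono s3 := dpoaux_mono_snd hK3p
  have ms2 : Mono s2 := dpoaux_mono_snd hD2p
  obtain ⟨K32, e3, e2, hK32⟩ := dpoaux_pb j3 j2
  have me3 : Mono e3 := dpoaux_mono_fst hK32
  have me2 : Mono e2 := dpoaux_mono_snd hK32
  obtain ⟨O32, f3, g3, hO32⟩ := dpoaux_po r3.o k3'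
  obtain ⟨I32, f2, g2, hI32⟩ := dpoaux_po r2.i g2'
  have mg3 : Mono g3 := Adhesive.mono_of_isPushout_of_mono_left hO32
  have mg2 : Mono g2 := Adhesive.mono_of_isPushout_of_mono_left hI32
  -- I32 into X2, and O32 into O321
  rw [← hg2'] at hX2'
  obtain ⟨xi, hxi, hXI⟩ := dpoaux_split hX2'.flip hI32.flip
  replace hXI := hXI.flip
  rw [← hk3'] at poO3
  obtain ⟨oo, hoo, hOO⟩ := dpoaux_split poO3.flip hO32.flip
  replace hOO := hOO.flip
  have mxi : Mono xi := Adhesive.mono_of_isPushout_of_mono_right hXI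
  obtain ⟨E, ε3, ε2, hE⟩ := dpoaux_pb w3 d2
  have eκ : (e3 ≫ s3) ≫ w3 = (e2 ≫ s2) ≫ d2 := by
    rw [Category.assoc, Category.assoc, ← hK3p.w, ← hD2p.w, hK32.w_assoc]
  obtain ⟨κ, hκ3, hκ2⟩ : ∃ κ : K32 ⟶ E, κ ≫ ε3 = e3 ≫ s3 ∧ κ ≫ ε2 = e2 ≫ s2 :=
    ⟨hE.lift _ _ eκ, by simp, by simp⟩
  have hA : IsPushout e2 κ s2 ε2 :=
    dpoaux_stab hK3u hD2p.flip hE.flip hK32.flip hκ2.symm hκ3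
  have hB : IsPushout e3 κ s3 ε3 :=
    dpoaux_stab hD2u hK3p.flip hE hK32 hκ3.symm hκ2
  have hFin2 := hA.paste_horiz hXI
  have hFinO := hB.paste_horiz hOO
  -- I32 and O1 cover X2
  have mnx : Mono (n1 ≫ x) := mono_comp _ _
  obtain ⟨M', σ2, σ1, J, l, r, m, hM', hJ, mm, hl, hr⟩ := dpoaux_union xi (n1 ≫ x)
  have fN : ∃ l, l ≫ m = x := by
    refine dpoaux_fac poN m x ⟨f2 ≫ l, ?_⟩ ⟨r, hr⟩
    rw [Category.assoc, hl, hxi]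
  have fy : ∃ l, l ≫ m = y := by
    obtain ⟨P, b', a', hP⟩ := dpoaux_pb d2 m3
    have ma' : Mono a' := dpoaux_mono_snd hP
    obtain ⟨W', f', g', _, _, _, hW⟩ := (Adhesive.van_kampen poN3).exists_cube_filling hP
      (Adhesive.isPullback_of_isPushout_of_mono_left hN3).flip
    refine dpoaux_fac hW m y ?_ ?_
    · have e : (a' ≫ t3') ≫ u = b' ≫ d2 := by rw [Category.assoc, hu3, hP.w]
      refine ⟨hD2p.lift _ _ e ≫ g2 ≫ l, ?_⟩
      rw [Category.assoc, Category.assoc, hl, hXI.w, ← Category.assoc, hD2p.lift_snd]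
    · obtain ⟨l', hl'⟩ := fN
      exact ⟨w2 ≫ l', by rw [Category.assoc, hl', hX2.w]⟩
  have fX : ∃ l, l ≫ m = 𝟙 X2 :=
    dpoaux_fac hX2 m (𝟙 X2) (by simpa using fN) (by simpa using fy)
  obtain ⟨ι, hι⟩ := fX
  have hι' : m ≫ ι = 𝟙 J := by rw [← cancel_mono m, Category.assoc, hι]; simp
  have hFinN : IsPushout σ2 σ1 xi (n1 ≫ x) :=
    hJ.of_iso (Iso.refl _) (Iso.refl _) (Iso.refl _) ⟨m, ι, hι', hι⟩ (by simp) (by simp)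
      (by simp [hl]) (by simp [hr])
  have mσ2 : Mono σ2 := dpoaux_mono_fst hM'
  have mσ1 : Mono σ1 := dpoaux_mono_snd hM'
  -- the final pullback
  have et : t3 ≫ w3 = (t21 ≫ b) ≫ d2 := by rw [Category.assoc, hd2, pbK3.w]
  obtain ⟨θ, hθ3, hθ2⟩ : ∃ θ : K321 ⟶ E, θ ≫ ε3 = t3 ∧ θ ≫ ε2 = t21 ≫ b :=
    ⟨hE.lift _ _ et, by simp, by simp⟩
  have hθ : IsPullback θ t21 ε2 b := by
    refine IsPullback.of_right ?_ hθ2 hE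
    rw [hθ3, hd2]
    exact pbK3
  have hFinK := hθ.paste_vert hpbD.flip
  have ho : θ ≫ ε3 ≫ v3 = t3 ≫ v3 := by rw [reassoc_of% hθ3]
  have hi : (t21 ≫ b1) ≫ d1 = t21 ≫ v21 := by rw [Category.assoc, hd1]
  refine ⟨M32, μ3, μ2,
    ⟨mμ3, mμ2, N32, t3', t2', hN32, Adhesive.mono_of_isPushout_of_mono_right hN32,
      Adhesive.mono_of_isPushout_of_mono_left hN32, K3b', k3', j3, hK3N, O32, f3, g3, hO32,
      D2', g2', j2, hD2N, I32, f2, g2, hI32, K32, e3, e2, hK32, mono_comp _ _, mono_comp _ _⟩,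
    M', σ2, σ1,
    ⟨mσ2, mσ1, X2, xi, n1 ≫ x, hFinN, mxi, mnx, E, κ, ε2 ≫ y, hFin2, O321, oo, ε3 ≫ v3, hFinO,
      D1, k1 ≫ a1, z, hX1', I321, c1 ≫ c21', d1, hI3', K321, θ, t21 ≫ b1, ?_,
      by rw [ho]; exact mol3, by rw [hi]; exact mil3⟩,
    Iso.refl _, Iso.refl _, Iso.refl _, ?_, ?_⟩
  · exact hFinK
  · simp [CompData.rule, hθ3, reassoc_of% hθ3]
  · simp [CompData.rule, hd1]
end

section
/- (Associativity of DPO rule composition, second direction, rules without application conditions.) Let C be a category satisfying the stated assumptions, and let r1, r2, r3 be linear rules in C. If μ32 is a DPO-admissible match of r3 into r2 with composite r32 = r3 ▷[μ32] r2, and μ(32)1 is a DPO-admissible match of r32 into r1, then there exist a DPO-admissible match μ21 of r2 into r1 and a DPO-admissible match μ3(21) of r3 into r21 := r2 ▷[μ21] r1 such that the composite rules (r3 ▷[μ32] r2) ▷[μ(32)1] r1 and r3 ▷[μ3(21)] (r2 ▷[μ21] r1) are isomorphic as spans. -/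
open CategoryTheory CategoryTheory.Limits

universe v u

section Aux

variable {𝒞 : Type u} [Category.{v} 𝒞] [Adhesive 𝒞]

theorem aux_union {A B Z : 𝒞} (f : A ⟶ Z) (g : B ⟶ Z) [Mono f] [Mono g] :
    ∃ (M : 𝒞) (a : M ⟶ A) (b : M ⟶ B) (N : 𝒞) (h : A ⟶ N) (i : B ⟶ N) (j : N ⟶ Z),
      Mono a ∧ Mono b ∧ IsPushout a b h i ∧ h ≫ j = f ∧ i ≫ j = g ∧ Mono j := by
  have hp := IsPullback.of_hasPullback f g
  have ha : Mono (pullback.fst f g) := hp.mono_fst_of_mono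
  have hb : Mono (pullback.snd f g) := hp.mono_snd_of_mono
  exact ⟨_, pullback.fst f g, pullback.snd f g, _, _, _,
    pushout.desc f g pullback.condition, ha, hb,
    IsPushout.of_hasPushout _ _, pushout.inl_desc _ _ _, pushout.inr_desc _ _ _, inferInstance⟩

theorem aux_jointly_epi {A B Z : 𝒞} (f : A ⟶ Z) (g : B ⟶ Z) [Mono f] [Mono g]
    (H : ∀ {W : 𝒞} (s t : Z ⟶ W), f ≫ s = f ≫ t → g ≫ s = g ≫ t → s = t) :
    ∃ (M : 𝒞) (a : M ⟶ A) (b : M ⟶ B), Mono a ∧ Mono b ∧ IsPushout a b f g := by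
  obtain ⟨M, a, b, N, h, i, j, ha, hb, po, hj, ij, mj⟩ := aux_union f g
  have : Epi j := ⟨fun s t e => H s t (by rw [← hj, Category.assoc, Category.assoc, e])
    (by rw [← ij, Category.assoc, Category.assoc, e])⟩
  have : IsIso j := isIso_of_mono_of_epi j
  have po' : IsPushout a b f g := by
    refine po.of_iso (Iso.refl _) (Iso.refl _) (Iso.refl _) (asIso j) ?_ ?_ ?_ ?_
    all_goals simp [hj, ij]
  exact ⟨M, a, b, ha, hb, po'⟩

theorem aux_stable {W X Y Z W' X' Y' Z' : 𝒞} {f : W ⟶ X} {g : W ⟶ Y} {h : X ⟶ Z} {i : Y ⟶ Z}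
    [Mono f] (H : IsPushout f g h i)
    {f' : W' ⟶ X'} {g' : W' ⟶ Y'} {h' : X' ⟶ Z'} {i' : Y' ⟶ Z'} {αW : W' ⟶ W}
    {αX : X' ⟶ X} {αY : Y' ⟶ Y} {αZ : Z' ⟶ Z}
    (hh : IsPullback h' αX αZ h) (hi : IsPullback i' αY αZ i)
    (hf : IsPullback f' αW αX f) (w : f' ≫ h' = g' ≫ i') (wg : g' ≫ αY = αW ≫ g) :
    IsPushout f' g' h' i' := by
  have hg : IsPullback g' αW αY g := by
    refine IsPullback.of_right ?_ wg hi
    rw [← w, ← H.w]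
    exact hf.paste_horiz hh
  exact (Adhesive.van_kampen H f' g' h' i' αW αX αY αZ hf hg hh.toCommSq hi.toCommSq ⟨w⟩).2
    ⟨hh, hi⟩

theorem aux_restrict {K I D N N' D' : 𝒞} {i : K ⟶ I} {k : K ⟶ D} {m : I ⟶ N} {d : D ⟶ N}
    [Mono i] (H : IsPushout i k m d) {m' : I ⟶ N'} {j : N' ⟶ N} [Mono j] (e : m' ≫ j = m)
    {d' : D' ⟶ N'} {l : D' ⟶ D} (hp : IsPullback d' l j d) :
    ∃ k' : K ⟶ D', k' ≫ l = k ∧ IsPushout i k' m' d' ∧ IsPushout d' l j d := by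
  have e' : (i ≫ m') ≫ j = k ≫ d := by rw [Category.assoc, e, H.w]
  have h1 : IsPushout i (hp.lift (i ≫ m') k e') m' d' := by
    refine aux_stable (αW := 𝟙 _) (αX := 𝟙 _) H
      (IsPullback.of_vert_isIso_mono ⟨by simp [e]⟩) hp
      (IsPullback.of_vert_isIso ⟨by simp⟩) (hp.lift_fst _ _ e').symm
      ((hp.lift_snd _ _ e').trans (Category.id_comp _).symm)
  refine ⟨_, hp.lift_snd _ _ e', h1, ?_⟩
  refine IsPushout.of_top ?_ hp.w h1
  simpa [e] using H

end Aux

/-- **Associativity of DPO rule composition (second direction).** If `μ32` is a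
DPO-admissible match of `r3` into `r2` with composite `r32 = r3 ▷[μ32] r2`, and
`μ(32)1` is a DPO-admissible match of `r32` into `r1`, then there exist a
DPO-admissible match `μ21` of `r2` into `r1` and a DPO-admissible match `μ3(21)` of
`r3` into `r21 = r2 ▷[μ21] r1` such that `(r3 ▷[μ32] r2) ▷[μ(32)1] r1` and
`r3 ▷[μ3(21)] (r2 ▷[μ21] r1)` are isomorphic as spans. -/
theorem dpo_composition_assoc_right_to_left
    {𝒞 : Type u} [Category.{v} 𝒞] [Adhesive 𝒞]
    [HasInitial 𝒞] [HasStrictInitialObjects 𝒞] [InitialMonoClass 𝒞]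
    (hfact : HasEpiMonoFact 𝒞) (hfin : Finitary 𝒞)
    (r1 r2 r3 : Rule 𝒞)
    {M32 : 𝒞} {p3 : M32 ⟶ r3.I} {p2 : M32 ⟶ r2.O}
    (c32 : CompData r3 r2 M32 p3 p2)
    {M' : 𝒞} {s32 : M' ⟶ (c32.rule).I} {s1 : M' ⟶ r1.O}
    (c321 : CompData c32.rule r1 M' s32 s1) :
    ∃ (M21 : 𝒞) (q2 : M21 ⟶ r2.I) (q1 : M21 ⟶ r1.O)
      (c21 : CompData r2 r1 M21 q2 q1)
      (M3 : 𝒞) (t3 : M3 ⟶ r3.I) (t21 : M3 ⟶ (c21.rule).O)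
      (cfin : CompData r3 c21.rule M3 t3 t21),
      RuleIso c321.rule cfin.rule := by
  have := r1.mono_o
  have := r1.mono_i
  have := r2.mono_o
  have := r2.mono_i
  have := r3.mono_o
  have := r3.mono_i
  have := c32.mono_n2
  have := c32.mono_n1
  have mn1' : Mono c321.n1 := c321.mono_n1
  obtain ⟨N', n2', n1', poN', mn2', mn1', Kb, k, wb, poc, O', c2', v2', poO', K1b, k1', w1', poc1',
    I', c1', v1', poI', K', g2, g1, pbK', mol, mil, e⟩ :
    ∃ (N' : 𝒞) (n2' : c32.I21 ⟶ N') (n1' : r1.O ⟶ N') (_ : IsPushout s32 s1 n2' n1')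
      (_ : Mono n2') (_ : Mono n1') (Kb : 𝒞) (k : c32.K21 ⟶ Kb) (wb : Kb ⟶ N')
      (_ : IsPushout (c32.q1 ≫ c32.v1) k n2' wb)
      (O' : 𝒞) (c2' : c32.O21 ⟶ O') (v2' : Kb ⟶ O')
      (_ : IsPushout (c32.q2 ≫ c32.v2) k c2' v2')
      (K1b : 𝒞) (k1' : r1.K ⟶ K1b) (w1' : K1b ⟶ N') (_ : IsPushout r1.o k1' n1' w1')
      (I' : 𝒞) (c1' : r1.I ⟶ I') (v1' : K1b ⟶ I') (_ : IsPushout r1.i k1' c1' v1')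
      (K' : 𝒞) (g2 : K' ⟶ Kb) (g1 : K' ⟶ K1b) (_ : IsPullback g2 g1 wb w1')
      (mol : Mono (g2 ≫ v2')) (mil : Mono (g1 ≫ v1')),
      c321.rule = ⟨O', K', I', g2 ≫ v2', g1 ≫ v1', mol, mil⟩ :=
    ⟨_, _, _, c321.poN, c321.mono_n2, c321.mono_n1, _, _, _, c321.poc2, _, _, _, c321.poO,
      _, _, _, c321.poc1, _, _, _, c321.poI, _, _, _, c321.pbK, c321.mono_oleg, c321.mono_ileg, rfl⟩
  rw [e]
  have ms32 : Mono s32 := c321.mono_p2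
  have ms1 : Mono s1 := c321.mono_p1
  -- monos
  have mil32 : Mono (c32.q1 ≫ c32.v1) := c32.mono_ileg
  have mol32 : Mono (c32.q2 ≫ c32.v2) := c32.mono_oleg
  have mq1 : Mono c32.q1 := mono_of_mono c32.q1 c32.v1
  have mq2 : Mono c32.q2 := mono_of_mono c32.q2 c32.v2
  have mv1 : Mono c32.v1 := Adhesive.mono_of_isPushout_of_mono_left c32.poI
  have mw1 : Mono c32.w1 := Adhesive.mono_of_isPushout_of_mono_left c32.poc1
  have mw2 : Mono c32.w2 := Adhesive.mono_of_isPushout_of_mono_left c32.poc2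
  have mwb : Mono wb := Adhesive.mono_of_isPushout_of_mono_left poc
  have mw1' : Mono w1' := Adhesive.mono_of_isPushout_of_mono_left poc1'
  have mkwb : Mono (k ≫ wb) := by rw [← poc.w]; infer_instance
  have mk : Mono k := mono_of_mono k wb
  have mc1 : Mono c32.c1 := by
    have : Mono (c32.k1 ≫ c32.w1) := by rw [← c32.poc1.w]; infer_instance
    have : Mono c32.k1 := mono_of_mono _ c32.w1
    exact Adhesive.mono_of_isPushout_of_mono_right c32.poI
  -- P
  obtain ⟨P, pa, pb, hP⟩ : ∃ (P : 𝒞) (pa : c32.K1b ⟶ P) (pb : Kb ⟶ P),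
    IsPushout c32.q1 k pa pb := ⟨_, _, _, IsPushout.of_hasPushout _ _⟩
  have mpa : Mono pa := Adhesive.mono_of_isPushout_of_mono_right hP
  have mpb : Mono pb := Adhesive.mono_of_isPushout_of_mono_left hP
  obtain ⟨x, hpax, hpbx⟩ := hP.exists_desc (c32.v1 ≫ n2') wb (by rw [← poc.w, Category.assoc])
  have hPN : IsPushout c32.v1 pa n2' x :=
    IsPushout.of_left (by rw [hpbx]; exact poc) hpax.symm hP
  have mx : Mono x := Adhesive.mono_of_isPushout_of_mono_left hPN
  have hPI := c32.poI.paste_vert hPN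
  -- X
  obtain ⟨X, a, y, hX⟩ : ∃ (X : 𝒞) (a : c32.N ⟶ X) (y : P ⟶ X),
    IsPushout c32.w1 pa a y := ⟨_, _, _, IsPushout.of_hasPushout _ _⟩
  have ma : Mono a := Adhesive.mono_of_isPushout_of_mono_right hX
  have my : Mono y := Adhesive.mono_of_isPushout_of_mono_left hX
  have hX2 := c32.poc1.paste_vert hX
  have hX' := hP.paste_horiz hX
  -- Q
  obtain ⟨Q, qa, qb, hQ⟩ : ∃ (Q : 𝒞) (qa : c32.K2b ⟶ Q) (qb : Kb ⟶ Q),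
    IsPushout c32.q2 k qa qb := ⟨_, _, _, IsPushout.of_hasPushout _ _⟩
  obtain ⟨z, hqaz, hqbz⟩ := hQ.exists_desc (c32.w2 ≫ a) (pb ≫ y)
    (by rw [← Category.assoc, c32.pbK.w, hX'.w])
  have hQX : IsPushout c32.w2 qa a z :=
    IsPushout.of_left (by rw [hqbz, c32.pbK.w]; exact hX') hqaz.symm hQ
  have mz : Mono z := Adhesive.mono_of_isPushout_of_mono_left hQX
  have hQI := c32.poc2.paste_vert hQX
  obtain ⟨o, hqao, hqbo⟩ := hQ.exists_desc (c32.v2 ≫ c2') v2'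
    (by rw [← Category.assoc, poO'.w])
  have hQO : IsPushout c32.v2 qa c2' o :=
    IsPushout.of_left (by rw [hqbo]; exact poO') hqao.symm hQ
  have hO := c32.poO.paste_vert hQO
  have hPQ : IsPullback qb pb z y :=
    ((Adhesive.van_kampen hX c32.q2 k qa qb c32.q1 c32.w2 pb z c32.pbK
      (Adhesive.isPullback_of_isPushout_of_mono_left hP).flip ⟨hqaz⟩ ⟨hqbz⟩ ⟨hQ.w⟩).1 hQ).2
  -- N21
  obtain ⟨M21, q2, q1, N21, n2, n1, j, mq2', mq1', hN21, hn2j, hn1j, mj⟩ :=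
    aux_union (c32.c1 ≫ n2') n1'
  have mn2 : Mono n2 := by
    have : Mono (n2 ≫ j) := by rw [hn2j]; infer_instance
    exact mono_of_mono n2 j
  have mn1 : Mono n1 := by
    have : Mono (n1 ≫ j) := by rw [hn1j]; infer_instance
    exact mono_of_mono n1 j
  obtain ⟨P', d2, l2, hP'⟩ : ∃ (P' : 𝒞) (d2 : P' ⟶ N21) (l2 : P' ⟶ P), IsPullback d2 l2 j x :=
    ⟨_, _, _, IsPullback.of_hasPullback _ _⟩
  obtain ⟨D1, d1, l1, hD1⟩ : ∃ (D1 : 𝒞) (d1 : D1 ⟶ N21) (l1 : D1 ⟶ K1b), IsPullback d1 l1 j w1' :=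
    ⟨_, _, _, IsPullback.of_hasPullback _ _⟩
  have md2 : Mono d2 := hP'.mono_fst_of_mono
  have md1 : Mono d1 := hD1.mono_fst_of_mono
  have ml2 : Mono l2 := hP'.mono_snd_of_mono
  have ml1 : Mono l1 := hD1.mono_snd_of_mono
  obtain ⟨k2, hk2, po2, po2'⟩ := aux_restrict hPI hn2j hP'
  obtain ⟨k1, hk1, po1, po1'⟩ := aux_restrict poc1' hn1j hD1
  -- O21 and I21
  obtain ⟨O21, cO, vO, hO21⟩ : ∃ (O21 : 𝒞) (cO : r2.O ⟶ O21) (vO : P' ⟶ O21),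
    IsPushout r2.o k2 cO vO := ⟨_, _, _, IsPushout.of_hasPushout _ _⟩
  obtain ⟨I21, cI, vI, hI21⟩ : ∃ (I21 : 𝒞) (cI : r1.I ⟶ I21) (vI : D1 ⟶ I21),
    IsPushout r1.i k1 cI vI := ⟨_, _, _, IsPushout.of_hasPushout _ _⟩
  have mvO : Mono vO := Adhesive.mono_of_isPushout_of_mono_left hO21
  have mvI : Mono vI := Adhesive.mono_of_isPushout_of_mono_left hI21
  obtain ⟨K21, e2, e1, hK21⟩ : ∃ (K21 : 𝒞) (e2 : K21 ⟶ P') (e1 : K21 ⟶ D1),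
    IsPullback e2 e1 d2 d1 := ⟨_, _, _, IsPullback.of_hasPullback _ _⟩
  have me2 : Mono e2 := hK21.mono_fst_of_mono
  have me1 : Mono e1 := hK21.mono_snd_of_mono
  obtain ⟨u, hcu, hvu⟩ := hO21.exists_desc (c32.n1 ≫ a) (l2 ≫ y)
    (by rw [← Category.assoc k2, hk2, hX2.w])
  have hOX : IsPushout vO l2 u y := by
    refine IsPushout.of_top (v₁₁ := k2) (v₁₂ := cO) (h₁₁ := r2.o) ?_ hvu hO21
    rw [hcu, hk2]; exact hX2
  obtain ⟨s, hcs, hvs⟩ := hI21.exists_desc c1' (l1 ≫ v1')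
    (by rw [← Category.assoc k1, hk1, poI'.w])
  have hII : IsPushout vI l1 s v1' := by
    refine IsPushout.of_top (v₁₁ := k1) (v₁₂ := cI) (h₁₁ := r1.i) ?_ hvs hI21
    rw [hcs, hk1]; exact poI'
  have mu : Mono u := Adhesive.mono_of_isPushout_of_mono_right hOX
  -- joint epi
  have hjoint : ∀ {W : 𝒞} (f g : X ⟶ W), (c32.n2 ≫ a) ≫ f = (c32.n2 ≫ a) ≫ g →
      u ≫ f = u ≫ g → f = g := by
    intro W f g h1 h2
    have h3 : a ≫ f = a ≫ g := by
      apply c32.poN.hom_ext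
      · simpa using h1
      · rw [← Category.assoc, ← hcu, Category.assoc, h2, ← Category.assoc, hcu, Category.assoc]
    apply hX.hom_ext h3
    have t := IsPullback.of_hasPullback x n1'
    refine Adhesive.isPushout_isPullback_isPullback_hom_ext poN'
      (Adhesive.isPullback_of_isPushout_of_mono_left hPN).flip t ?_ ?_
    · rw [← Category.assoc, ← hX.w, Category.assoc, h3, ← Category.assoc, hX.w, Category.assoc]
    · obtain ⟨b, hb1, hb2⟩ := hP'.exists_lift (pullback.snd x n1' ≫ n1) (pullback.fst x n1')
        (by rw [Category.assoc, hn1j, t.w])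
      rw [← hb2]
      have h4 : l2 ≫ y ≫ f = l2 ≫ y ≫ g := by
        rw [← Category.assoc, ← hvu, Category.assoc, h2, ← Category.assoc, hvu, Category.assoc]
      rw [Category.assoc, Category.assoc, h4]
  obtain ⟨M3, t3, t21, mt3, mt21, poX⟩ := aux_jointly_epi (c32.n2 ≫ a) u hjoint
  -- Z
  obtain ⟨Z, z1, z2, hZ⟩ : ∃ (Z : 𝒞) (z1 : Z ⟶ P) (z2 : Z ⟶ K1b), IsPullback z1 z2 x w1' :=
    ⟨_, _, _, IsPullback.of_hasPullback _ _⟩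
  have mz1 : Mono z1 := hZ.mono_fst_of_mono
  have mz2 : Mono z2 := hZ.mono_snd_of_mono
  obtain ⟨f, hf1, hf2⟩ := hZ.exists_lift (e2 ≫ l2) (e1 ≫ l1)
    (by rw [Category.assoc, Category.assoc, ← hP'.w, ← hD1.w, hK21.w_assoc])
  have hZP : IsPushout e2 f l2 z1 := aux_stable po1' hP'.flip hZ hK21 hf1.symm hf2
  have hZK : IsPushout e1 f l1 z2 := aux_stable po2' hD1.flip hZ.flip hK21.flip hf2.symm hf1
  have hZX : IsPushout (e2 ≫ vO) f u (z1 ≫ y) := hZP.paste_horiz hOX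
  have hZI : IsPushout (e1 ≫ vI) f s (z2 ≫ v1') := hZK.paste_horiz hII
  -- final pullback
  obtain ⟨h, hh1, hh2⟩ := hZ.exists_lift (g2 ≫ pb) g1 (by rw [Category.assoc, hpbx, pbK'.w])
  have hKP : IsPullback g2 h pb z1 := by
    refine IsPullback.of_bot (v₂₁ := z2) (v₂₂ := x) (h₃₁ := w1') ?_ hh1.symm hZ
    rw [hh2, hpbx]; exact pbK'
  have hKX : IsPullback (g2 ≫ qb) h z (z1 ≫ y) := by
    exact hKP.paste_horiz hPQ
  have ml : Mono ((g2 ≫ qb) ≫ o) := by rw [Category.assoc, hqbo]; exact mol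
  have mr : Mono (h ≫ z2 ≫ v1') := by rw [← Category.assoc, hh2]; exact mil
  refine ⟨M21, q2, q1, ⟨mq2', mq1', N21, n2, n1, hN21, mn2, mn1, P', k2, d2, po2, O21, cO, vO, hO21,
    D1, k1, d1, po1, I21, cI, vI, hI21, K21, e2, e1, hK21, inferInstance, inferInstance⟩,
    M3, t3, t21, ⟨mt3, mt21, X, c32.n2 ≫ a, u, poX, inferInstance, mu, Q, c32.k2 ≫ qa, z, hQI,
      O', c32.c2 ≫ c2', o, hO, Z, f, z1 ≫ y, hZX, I', s, z2 ≫ v1', hZI, K', g2 ≫ qb, h, hKX,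
      ml, mr⟩, Iso.refl _, Iso.refl _, Iso.refl _, ?_, ?_⟩
  · simp [CompData.rule, hqbo]
  · simp [CompData.rule, reassoc_of% hh2]
end

section
/- (Decomposition of the application of a composite span into an n-step derivation, rules without application conditions.) Let C be a category satisfying the stated assumptions, let t_1, ..., t_n be composable spans of monomorphisms with t_j a span from Y_j to Y_{j−1} (for j = 1, ..., n), and let r = t_n ∘ ... ∘ t_1 be their span composition, a linear rule with output object Y_n and input object Y_0. Then for every object X_0 and every DPO-admissible match m : Y_0 → X_0 for r, there exist objects X_1, ..., X_n, DPO-admissible matches m_j : Y_{j−1} → X_{j−1} for t_j, and DPO direct derivations X_j = (t_j)_{m_j}(X_{j−1}) for j = 1, ..., n, such that X_n is isomorphic to r_m(X_0); moreover these data are determined uniquely up to isomorphism. -/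
open CategoryTheory CategoryTheory.Limits

universe v u

/-- A decomposition of the application of a composite span into an `n`-step DPO
derivation sequence: states `X j` (starting at `X0`, with initial match `m`),
matches/comatches `mt j : Y j ⟶ X j`, and for every `j < n` a DPO direct derivation
applying the `(j+1)`-st span `(Y (j+1) ⟵o j— K j —i j⟶ Y j)` at match `mt j`, whose
comatch is `mt (j+1)`. -/
structure Decomp {𝒞 : Type u} [Category.{v} 𝒞] (n : ℕ) (Y K : ℕ → 𝒞)
    (o : ∀ j, K j ⟶ Y (j + 1)) (i : ∀ j, K j ⟶ Y j)
    (X0 : 𝒞) (m : Y 0 ⟶ X0) where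
  X : ℕ → 𝒞
  hX0 : X 0 = X0
  mt : ∀ j, Y j ⟶ X j
  hm0 : mt 0 ≫ eqToHom hX0 = m
  mono_mt : ∀ j, j ≤ n → Mono (mt j)
  D : ℕ → 𝒞
  k : ∀ j, K j ⟶ D j
  d : ∀ j, D j ⟶ X j
  poc : ∀ j, j < n → IsPushout (i j) (k j) (mt j) (d j)
  ds : ∀ j, D j ⟶ X (j + 1)
  po : ∀ j, j < n → IsPushout (o j) (k j) (mt (j + 1)) (ds j)

theorem pb_mono_snd {𝒞 : Type u} [Category.{v} 𝒞] {A B C D : 𝒞}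
    {f : A ⟶ B} {g : A ⟶ C} {h : B ⟶ D} {k : C ⟶ D} (H : IsPullback f g h k) [Mono h] :
    Mono g := by
  refine ⟨fun a b hab => H.hom_ext ?_ hab⟩
  rw [← cancel_mono h, Category.assoc, Category.assoc, H.w, reassoc_of% hab]

theorem poc_isIso {𝒞 : Type u} [Category.{v} 𝒞] [Adhesive 𝒞] {A B D D' X : 𝒞}
    {f : A ⟶ B} {g : A ⟶ D} {h : B ⟶ X} {i : D ⟶ X} {g' : A ⟶ D'} {i' : D' ⟶ X} [Mono f]
    (H : IsPushout f g h i) (H' : IsPushout f g' h i')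
    {U : 𝒞} {u : U ⟶ D} {u' : U ⟶ D'} (hU : IsPullback u u' i i') : IsIso u := by
  have hp := (Adhesive.isPullback_of_isPushout_of_mono_left H).flip
  obtain ⟨W', f', gg, αW, h1, h2, h3⟩ :=
    (Adhesive.van_kampen H').exists_cube_filling hp hU
  have hf : IsIso f' := by
    have e : f' = αW := by rw [← cancel_mono f]; exact h1.w
    refine ⟨h1.lift (𝟙 _) (𝟙 _) rfl, ?_, by simp⟩
    apply h1.hom_ext
    · simp
    · simp [e]
  exact h3.isIso_inr_of_isIso

theorem poc_unique {𝒞 : Type u} [Category.{v} 𝒞] [Adhesive 𝒞] {A B D D' X : 𝒞}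
    {f : A ⟶ B} {g : A ⟶ D} {h : B ⟶ X} {i : D ⟶ X} {g' : A ⟶ D'} {i' : D' ⟶ X} [Mono f]
    (H : IsPushout f g h i) (H' : IsPushout f g' h i') :
    ∃ φ : D ≅ D', g ≫ φ.hom = g' ∧ φ.hom ≫ i' = i := by
  have : Mono i := Adhesive.mono_of_isPushout_of_mono_left H
  have : Mono i' := Adhesive.mono_of_isPushout_of_mono_left H'
  have hU := IsPullback.of_hasPullback i i'
  have h1 := poc_isIso H H' hU
  have h2 := poc_isIso H' H hU.flip
  have e : (inv (pullback.fst i i') ≫ pullback.snd i i') ≫ i' = i := by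
    simp [← pullback.condition]
  refine ⟨asIso (inv (pullback.fst i i') ≫ pullback.snd i i'), ?_, e⟩
  rw [← cancel_mono i', Category.assoc]
  simp only [asIso_hom, e]
  rw [← H.w, H'.w]

theorem decomp_unique {𝒞 : Type u} [Category.{v} 𝒞] [Adhesive 𝒞]
    (n : ℕ) (Y K : ℕ → 𝒞)
    (o : ∀ j, K j ⟶ Y (j + 1)) (i : ∀ j, K j ⟶ Y j)
    (mono_i : ∀ j, j < n → Mono (i j))
    {X0 : 𝒞} (m : Y 0 ⟶ X0) (dec dec' : Decomp n Y K o i X0 m) :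
    ∀ j, j ≤ n → ∃ e : dec.X j ≅ dec'.X j, dec.mt j ≫ e.hom = dec'.mt j := by
  intro j
  induction j with
  | zero =>
    intro _
    refine ⟨eqToIso (dec.hX0.trans dec'.hX0.symm), ?_⟩
    have h1 := dec.hm0
    have h2 := dec'.hm0
    rw [← cancel_mono (eqToHom dec'.hX0), h2]
    simpa using h1
  | succ j ih =>
    intro hj
    obtain ⟨e, he⟩ := ih (by omega)
    have := mono_i j (by omega)
    have p1 := dec.poc j (by omega)
    have p2 := dec'.poc j (by omega)
    have p1' : IsPushout (i j) (dec.k j) (dec'.mt j) (dec.d j ≫ e.hom) :=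
      p1.of_iso (Iso.refl _) (Iso.refl _) (Iso.refl _) e (by simp) (by simp) (by simp [he])
        (by simp)
    obtain ⟨φ, h1, h2⟩ := poc_unique p1' p2
    have q1 := dec.po j (by omega)
    have q2 := dec'.po j (by omega)
    have q1' : IsPushout (o j) (dec'.k j) (dec.mt (j+1)) (φ.inv ≫ dec.ds j) :=
      q1.of_iso (Iso.refl _) (Iso.refl _) φ (Iso.refl _) (by simp) (by simp [h1]) (by simp)
        (by simp)
    exact ⟨q1'.isoIsPushout _ _ q2, by simp⟩

theorem decomp_exists {𝒞 : Type u} [Category.{v} 𝒞] [Adhesive 𝒞]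
    (n : ℕ) (Y K : ℕ → 𝒞)
    (o : ∀ j, K j ⟶ Y (j + 1)) (i : ∀ j, K j ⟶ Y j)
    {X0 : 𝒞} (m : Y 0 ⟶ X0) {Q D0 : 𝒞} (kr : Q ⟶ D0) [Mono kr] (dd : D0 ⟶ X0)
    (B : ∀ j, j ≤ n → (Q ⟶ Y j)) (monoB : ∀ j h, Mono (B j h))
    (ha : ∀ j (h : j < n), ∃ a : Q ⟶ K j, a ≫ i j = B j h.le ∧ a ≫ o j = B (j + 1) h)
    (h0 : IsPushout (B 0 (Nat.zero_le n)) kr m dd) :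
    ∃ dec : Decomp n Y K o i X0 m, ∃ xd, IsPushout (B n le_rfl) kr (dec.mt n) xd := by
  have key : ∀ j, ∃ p : (Σ X : 𝒞, (Y j ⟶ X)), ∀ h : j ≤ n, ∃ xd, IsPushout (B j h) kr p.2 xd := by
    intro j
    by_cases h : j ≤ n
    · exact ⟨⟨pushout (B j h) kr, pushout.inl _ _⟩, fun _ => ⟨_, IsPushout.of_hasPushout _ _⟩⟩
    · exact ⟨⟨Y j, 𝟙 _⟩, fun h' => absurd h' h⟩
  choose p0 hp0 using key
  obtain ⟨p, hp, hpz⟩ : ∃ p : (∀ j, Σ X : 𝒞, (Y j ⟶ X)),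
      (∀ j, ∀ h : j ≤ n, ∃ xd, IsPushout (B j h) kr (p j).2 xd) ∧ p 0 = ⟨X0, m⟩ := by
    refine ⟨fun j => Nat.casesOn j ⟨X0, m⟩ (fun j => p0 (j + 1)), ?_, rfl⟩
    rintro (_ | j) h
    · exact ⟨dd, h0⟩
    · exact hp0 (j + 1) h
  have key2 : ∀ j, ∃ (D : 𝒞) (k : K j ⟶ D) (d : D ⟶ (p j).1) (ds : D ⟶ (p (j + 1)).1),
      j < n → IsPushout (i j) k (p j).2 d ∧ IsPushout (o j) k (p (j + 1)).2 ds := by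
    intro j
    by_cases h : j < n
    · obtain ⟨a, h1, h2⟩ := ha j h
      obtain ⟨x1, q1⟩ := hp j h.le
      obtain ⟨x2, q2⟩ := hp (j + 1) h
      have s := IsPushout.of_hasPushout kr a
      rw [← h1] at q1
      rw [← h2] at q2
      exact ⟨_, _, _, _, fun _ => ⟨IsPushout.of_left' q1 s.flip, IsPushout.of_left' q2 s.flip⟩⟩
    · exact ⟨K j, 𝟙 _, i j ≫ (p j).2, o j ≫ (p (j + 1)).2, fun h' => absurd h' h⟩
  choose D k d ds hD using key2
  refine ⟨⟨fun j => (p j).1, by rw [hpz], fun j => (p j).2, ?_, ?_, D, k, d,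
    fun j h => (hD j h).1, ds, fun j h => (hD j h).2⟩, hp n le_rfl⟩
  · generalize_proofs pf
    revert pf
    rw [hpz]
    intro pf
    simp
  · intro j h
    obtain ⟨x, q⟩ := hp j h
    exact Adhesive.mono_of_isPushout_of_mono_right q

/-- **Decomposition of the application of a composite span into an `n`-step
derivation (DPO, rules without conditions).** Let `t_j = (Y j ⟵o— K j —i⟶ Y (j-1))`
(`j = 1, …, n`, here 0-indexed) be composable spans of monomorphisms, and let the
span `(Y n ⟵top n— P n —bot n⟶ Y 0)` be their span composition (witnessed by the
iterated-pullback data `hbase`, `hstep`).  Then for every object `X0` and every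
DPO-admissible match `m : Y 0 ⟶ X0` for the composite (admissibility witnessed by
the direct-derivation data `dr`), there exists an `n`-step DPO derivation sequence
decomposing the one-step application, with final state isomorphic to `r_m(X0)`;
moreover any two such decompositions have isomorphic states at every stage. -/
theorem dpo_composite_decomposition
    {𝒞 : Type u} [Category.{v} 𝒞] [Adhesive 𝒞]
    [HasInitial 𝒞] [HasStrictInitialObjects 𝒞] [InitialMonoClass 𝒞]
    (hfact : HasEpiMonoFact 𝒞) (hfin : Finitary 𝒞)
    (n : ℕ) (hn : 1 ≤ n) (Y K : ℕ → 𝒞)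
    (o : ∀ j, K j ⟶ Y (j + 1)) (i : ∀ j, K j ⟶ Y j)
    (mono_o : ∀ j, j < n → Mono (o j)) (mono_i : ∀ j, j < n → Mono (i j))
    (P : ℕ → 𝒞) (top : ∀ j, P j ⟶ Y j) (bot : ∀ j, P j ⟶ Y 0)
    (hbase : ∃ e : P 1 ≅ K 0, e.hom ≫ o 0 = top 1 ∧ e.hom ≫ i 0 = bot 1)
    (hstep : ∀ j, 1 ≤ j → j < n →
      ∃ (pl : P (j + 1) ⟶ K j) (pk : P (j + 1) ⟶ P j),
        IsPullback pl pk (i j) (top j) ∧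
          top (j + 1) = pl ≫ o j ∧ bot (j + 1) = pk ≫ bot j)
    (mono_top : Mono (top n)) (mono_bot : Mono (bot n))
    {X0 : 𝒞} (m : Y 0 ⟶ X0) [Mono m]
    (dr : DerivData (top n) (bot n) m) :
    (∃ dec : Decomp n Y K o i X0 m, Nonempty (dec.X n ≅ dr.Y)) ∧
      ∀ dec dec' : Decomp n Y K o i X0 m,
        ∀ j, j ≤ n → Nonempty (dec.X j ≅ dec'.X j) := by
  refine ⟨?_, fun dec dec' j hj =>
    let ⟨e, _⟩ := decomp_unique n Y K o i mono_i m dec dec' j hj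
    ⟨e⟩⟩
  obtain ⟨e, he1, he2⟩ := hbase
  have monos : ∀ j, 1 ≤ j → j ≤ n → Mono (top j) ∧ Mono (bot j) := by
    intro j hj
    induction j, hj using Nat.le_induction with
    | base =>
      intro h
      have := mono_o 0 h
      have := mono_i 0 h
      rw [← he1, ← he2]
      exact ⟨inferInstance, inferInstance⟩
    | succ j hj ih =>
      intro h
      obtain ⟨_, _⟩ := ih (by omega)
      have := mono_o j h
      have := mono_i j h
      obtain ⟨pl, pk, hpb, h1, h2⟩ := hstep j hj h
      have : Mono pl := pb_mono_snd hpb.flip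
      have : Mono pk := pb_mono_snd hpb
      rw [h1, h2]
      exact ⟨inferInstance, inferInstance⟩
  have hq : ∀ j, 1 ≤ j → j ≤ n → ∃ q : P n ⟶ P j, q ≫ bot j = bot n := by
    intro j hj hjn
    induction hjn using Nat.decreasingInduction with
    | self => exact ⟨𝟙 _, by simp⟩
    | of_succ j h ih =>
      obtain ⟨q, hq⟩ := ih (by omega)
      obtain ⟨pl, pk, hpb, h1, h2⟩ := hstep j hj h
      exact ⟨q ≫ pk, by rw [Category.assoc, ← h2, hq]⟩
  choose q hq using hq
  have monoq : ∀ j h1 h2, Mono (q j h1 h2) := by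
    intro j h1 h2
    have : Mono (q j h1 h2 ≫ bot j) := by rw [hq]; exact mono_bot
    exact mono_of_mono _ (bot j)
  let B : ∀ j, j ≤ n → (P n ⟶ Y j) := fun j =>
    Nat.casesOn j (fun _ => bot n) (fun j h => q (j + 1) (Nat.succ_pos j) h ≫ top (j + 1))
  have hB : ∀ j h1 h2, B j h2 = q j h1 h2 ≫ top j := by
    rintro (_ | j) h1 h2
    · omega
    · rfl
  have hBn : B n le_rfl = top n := by
    have : q n hn le_rfl = 𝟙 _ := by
      rw [← cancel_mono (bot n), hq]; simp
    rw [hB n hn, this, Category.id_comp]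
  have : Mono dr.k := pb_mono_snd (Adhesive.isPullback_of_isPushout_of_mono_left dr.poc)
  have hmB : ∀ j h, Mono (B j h) := by
    rintro (_ | j) h
    · exact mono_bot
    · have := monoq (j + 1) (Nat.succ_pos j) h
      have := (monos (j + 1) (Nat.succ_pos j) h).1
      rw [hB (j + 1) (Nat.succ_pos j) h]
      infer_instance
  have hA : ∀ j (h : j < n), ∃ a : P n ⟶ K j, a ≫ i j = B j h.le ∧ a ≫ o j = B (j + 1) h := by
    rintro (_ | j) h
    · refine ⟨q 1 le_rfl h ≫ e.hom, ?_, ?_⟩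
      · rw [Category.assoc, he2, hq]; rfl
      · rw [Category.assoc, he1]
    · obtain ⟨pl, pk, hpb, h1, h2⟩ := hstep (j + 1) (Nat.succ_pos j) h
      have := (monos (j + 1) (Nat.succ_pos j) h.le).2
      refine ⟨q (j + 1 + 1) (Nat.succ_pos _) h ≫ pl, ?_, ?_⟩
      · have e3 : q (j + 1) (Nat.succ_pos j) h.le = q (j + 1 + 1) (Nat.succ_pos _) h ≫ pk := by
          rw [← cancel_mono (bot (j + 1)), hq, Category.assoc, ← h2, hq]
        rw [hB (j + 1) (Nat.succ_pos j), e3, Category.assoc, Category.assoc, hpb.w]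
      · rw [hB (j + 1 + 1) (Nat.succ_pos _), Category.assoc, h1]
  obtain ⟨dec, xd, hd⟩ := decomp_exists n Y K o i m dr.k dr.d B hmB hA dr.poc
  rw [hBn] at hd
  exact ⟨dec, ⟨hd.isoIsPushout _ _ dr.po⟩⟩
end

section
/- (Compositional characterization of sequential independence, DPO case, rules without application conditions.) Let C be a category satisfying the stated assumptions, and let X1 = (r1)_{m1}(X0) and X2 = (r2)_{m2}(X1) be two sequential DPO direct derivations for linear rules r1 = (O1 ←o1— K1 —i1→ I1) and r2 = (O2 ←o2— K2 —i2→ I2), with comatch m1* : O1 → X1. Let M21 be the pullback of the cospan (m2 : I2 → X1, m1* : O1 → X1) and let N21 be the pushout of the induced span (I2 ← M21 → O1), with induced monomorphisms n2 : I2 → N21 and n1 : O1 → N21. Then n2 admits a pushout complement K̄2 for (i2, n2), n1 admits a pushout complement K̄1 for (o1, n1), and the two derivations are sequentially independent if and only if there exist monomorphisms u : O1 → K̄2 and v : I2 → K̄1 such that (K̄2 → N21) ∘ u = n1 and (K̄1 → N21) ∘ v = n2. -/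
open CategoryTheory CategoryTheory.Limits

universe v u

section Helpers
variable {𝒞 : Type u} [Category.{v} 𝒞] [Adhesive 𝒞]

theorem union_mono {A B Z M N : 𝒞} {a : A ⟶ Z} {b : B ⟶ Z} [Mono a] [Mono b]
    {p : M ⟶ A} {q : M ⟶ B} (hpb : IsPullback p q a b)
    {n : A ⟶ N} {n' : B ⟶ N} (hpo : IsPushout p q n n') :
    Mono (hpo.desc a b hpb.w) := by
  have H : IsPushout (pullback.fst a b) (pullback.snd a b) n n' :=
    hpo.of_iso hpb.isoPullback (Iso.refl _) (Iso.refl _) (Iso.refl _)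
      (by simp) (by simp) (by simp) (by simp)
  have e : hpo.desc a b hpb.w = H.isoPushout.hom ≫ pushout.desc a b pullback.condition := by
    apply hpo.hom_ext
    · simp only [IsPushout.inl_desc, IsPushout.inl_isoPushout_hom_assoc]
      exact (pushout.inl_desc _ _ _).symm
    · simp only [IsPushout.inr_desc, IsPushout.inr_isoPushout_hom_assoc]
      exact (pushout.inr_desc _ _ _).symm
  rw [e]
  infer_instance

/-- Pushout complements restrict along subobjects containing the match. -/
theorem restrict_poc {K I D X N : 𝒞} {i : K ⟶ I} {k : K ⟶ D} {m : I ⟶ X} {d : D ⟶ X} [Mono i]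
    (H : IsPushout i k m d) (x : N ⟶ X) [Mono x] (n : I ⟶ N) (hn : n ≫ x = m) :
    ∃ (P : 𝒞) (k' : K ⟶ P) (w : P ⟶ N) (y : P ⟶ D),
      IsPushout i k' n w ∧ IsPullback w y x d := by
  have hh : IsPullback n (𝟙 I) x m := by
    subst hn
    refine ⟨⟨by simp⟩, ⟨PullbackCone.IsLimit.mk _ (fun s => s.snd) (fun s => ?_) (fun s => ?_)
      (fun s l _ h2 => ?_)⟩⟩
    · rw [← cancel_mono x, s.condition, Category.assoc]
    · simp
    · simpa using h2
  have hi := IsPullback.of_hasPullback x d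
  obtain ⟨W, f', g', a, h1, h2, h3⟩ := (Adhesive.van_kampen H).exists_cube_filling hh hi
  have : IsIso a := h1.isIso_snd_of_isIso
  refine ⟨_, inv a ≫ g', _, _, ?_, hi⟩
  refine h3.of_iso (asIso a) (Iso.refl _) (Iso.refl _) (Iso.refl _) ?_ ?_ ?_ ?_
  · simpa using h1.w
  · simp
  · simp
  · simp

theorem poc_unique_s11 {K I D D' N : 𝒞} {i : K ⟶ I} [Mono i] {n : I ⟶ N}
    {k : K ⟶ D} {w : D ⟶ N} {k' : K ⟶ D'} {w' : D' ⟶ N}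
    (H : IsPushout i k n w) (H' : IsPushout i k' n w') : ∃ φ : D' ⟶ D, φ ≫ w = w' := by
  have : Mono w' := Adhesive.mono_of_isPushout_of_mono_left H'
  have hh := (Adhesive.isPullback_of_isPushout_of_mono_left H').flip
  have hi := IsPullback.of_hasPullback w' w
  obtain ⟨W, f', g', a, h1, h2, h3⟩ := (Adhesive.van_kampen H).exists_cube_filling hh hi
  have : IsIso f' := IsKernelPair.isIso_of_mono h1
  have : IsIso (pullback.fst w' w) := h3.isIso_inr_of_isIso
  exact ⟨inv (pullback.fst w' w) ≫ pullback.snd w' w, by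
    rw [Category.assoc, ← hi.w, IsIso.inv_hom_id_assoc]⟩

theorem factor_iff {K I D X N A P : 𝒞} {i : K ⟶ I} {k : K ⟶ D} {m : I ⟶ X} {d : D ⟶ X} [Mono i]
    (H : IsPushout i k m d) (x : N ⟶ X) [Mono x] (n : I ⟶ N) (hn : n ≫ x = m)
    {k' : K ⟶ P} {w : P ⟶ N} (HP : IsPushout i k' n w) (c : A ⟶ N) :
    (∃ f : A ⟶ D, f ≫ d = c ≫ x) ↔ ∃ f : A ⟶ P, f ≫ w = c := by
  obtain ⟨Q, kq, wq, y, h1, h2⟩ := restrict_poc H x n hn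
  constructor
  · rintro ⟨f, hf⟩
    obtain ⟨φ, hφ⟩ := poc_unique_s11 HP h1
    exact ⟨h2.lift c f hf.symm ≫ φ, by simp [hφ]⟩
  · rintro ⟨f, hf⟩
    obtain ⟨φ, hφ⟩ := poc_unique_s11 h1 HP
    exact ⟨f ≫ φ ≫ y, by rw [← hf, ← hφ]; simp [h2.w]⟩

end Helpers

/-- **Compositional characterization of sequential independence (DPO, rules without
conditions).** Given two sequential DPO direct derivations `X1 = (r1)_{m1}(X0)` and
`X2 = (r2)_{m2}(X1)`, with `M21` the pullback of `(m2, m1*)` and `N21` the pushout of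
the induced span `(I2 ⟵p2— M21 —p1⟶ O1)`: `n2` admits a pushout complement for
`(r2.i, n2)`, `n1` admits a pushout complement for `(r1.o, n1)`, and the two
derivations are sequentially independent (existence of monomorphisms
`nn1 : O1 ⟶ D2`, `nn2 : I2 ⟶ D1` with `nn1 ≫ d2 = m1*` and `nn2 ≫ d1* = m2`) if and
only if there exist monomorphisms `u : O1 ⟶ K̄2` and `v : I2 ⟶ K̄1` with
`u ≫ w2 = n1` and `v ≫ w1 = n2`. -/
theorem dpo_sequential_independence_compositional
    {𝒞 : Type u} [Category.{v} 𝒞] [Adhesive 𝒞]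
    [HasInitial 𝒞] [HasStrictInitialObjects 𝒞] [InitialMonoClass 𝒞]
    (hfact : HasEpiMonoFact 𝒞) (hfin : Finitary 𝒞)
    (r1 r2 : Rule 𝒞)
    {X0 : 𝒞} (m1 : r1.I ⟶ X0) [Mono m1] (d1 : DerivData r1.o r1.i m1)
    (m2 : r2.I ⟶ d1.Y) [Mono m2] (d2 : DerivData r2.o r2.i m2)
    {M21 : 𝒞} (p2 : M21 ⟶ r2.I) (p1 : M21 ⟶ r1.O)
    (hpb : IsPullback p2 p1 m2 d1.ms)
    {N21 : 𝒞} (n2 : r2.I ⟶ N21) (n1 : r1.O ⟶ N21)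
    (hpo : IsPushout p2 p1 n2 n1) :
    (∃ (K2b : 𝒞) (k2 : r2.K ⟶ K2b) (w2 : K2b ⟶ N21),
        IsPushout r2.i k2 n2 w2) ∧
    (∃ (K1b : 𝒞) (k1 : r1.K ⟶ K1b) (w1 : K1b ⟶ N21),
        IsPushout r1.o k1 n1 w1) ∧
    ∀ (K2b : 𝒞) (k2 : r2.K ⟶ K2b) (w2 : K2b ⟶ N21),
      IsPushout r2.i k2 n2 w2 →
      ∀ (K1b : 𝒞) (k1 : r1.K ⟶ K1b) (w1 : K1b ⟶ N21),
        IsPushout r1.o k1 n1 w1 →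
        ((∃ (nn1 : r1.O ⟶ d2.D) (nn2 : r2.I ⟶ d1.D),
            Mono nn1 ∧ Mono nn2 ∧ nn1 ≫ d2.d = d1.ms ∧ nn2 ≫ d1.ds = m2) ↔
          (∃ (u : r1.O ⟶ K2b) (v : r2.I ⟶ K1b),
            Mono u ∧ Mono v ∧ u ≫ w2 = n1 ∧ v ≫ w1 = n2)) := by
  have := r1.mono_o
  have := r1.mono_i
  have := r2.mono_i
  have hk : Mono d1.k := (Adhesive.isPullback_of_isPushout_of_mono_left d1.poc).mono_snd_of_mono
  have hms : Mono d1.ms := Adhesive.mono_of_isPushout_of_mono_right d1.po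
  have hx := union_mono hpb hpo
  have e2 : n2 ≫ hpo.desc m2 d1.ms hpb.w = m2 := hpo.inl_desc _ _ _
  have e1 : n1 ≫ hpo.desc m2 d1.ms hpb.w = d1.ms := hpo.inr_desc _ _ _
  generalize hpo.desc m2 d1.ms hpb.w = x at hx e1 e2
  have hn2 : Mono n2 := by
    have : Mono (n2 ≫ x) := by rw [e2]; infer_instance
    exact mono_of_mono n2 x
  have hn1 : Mono n1 := by
    have : Mono (n1 ≫ x) := by rw [e1]; infer_instance
    exact mono_of_mono n1 x
  have mk : ∀ {A B E : 𝒞} {f : A ⟶ B} {g : B ⟶ E} {h : A ⟶ E}, Mono h → f ≫ g = h → Mono f := by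
    rintro A B E f g h hm rfl
    exact mono_of_mono f g
  refine ⟨?_, ?_, ?_⟩
  · obtain ⟨P, k', w, y, h, -⟩ := restrict_poc d2.poc x n2 e2
    exact ⟨P, k', w, h⟩
  · obtain ⟨P, k', w, y, h, -⟩ := restrict_poc d1.po x n1 e1
    exact ⟨P, k', w, h⟩
  · intro K2b k2 w2 H2 K1b k1 w1 H1
    have F2 := factor_iff d2.poc x n2 e2 H2 n1
    have F1 := factor_iff d1.po x n1 e1 H1 n2
    rw [e1] at F2
    rw [e2] at F1
    constructor
    · rintro ⟨a, b, -, -, ha, hb⟩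
      obtain ⟨u, hu⟩ := F2.1 ⟨a, ha⟩
      obtain ⟨v, hv⟩ := F1.1 ⟨b, hb⟩
      exact ⟨u, v, mk hn1 hu, mk hn2 hv, hu, hv⟩
    · rintro ⟨u, v, -, -, hu, hv⟩
      obtain ⟨a, ha⟩ := F2.2 ⟨u, hu⟩
      obtain ⟨b, hb⟩ := F1.2 ⟨v, hv⟩
      exact ⟨a, b, mk hms ha, mk (by assumption) hb, ha, hb⟩
end

section
/- (Compositional concurrent commutativity, part (i).) Let C be a category satisfying the stated assumptions, let r1 = (O1 ←o1— K1 —i1→ I1) and r2 = (O2 ←o2— K2 —i2→ I2) be linear rules, and assume μ21 = (I2 ← M21 → O1) is a DPO-admissible match of r2 into r1, with associated pushout N21 (induced morphisms n2 : I2 → N21, n1 : O1 → N21), pushout complements K̄2 (for (i2, n2)) and K̄1 (for (o1, n1)), and assume there exist monomorphisms u : O1 → K̄2 and v : I2 → K̄1 such that (K̄2 → N21) ∘ u = n1 and (K̄1 → N21) ∘ v = n2. Then the pullback of the cospan (u : O1 → K̄2, K2 → K̄2) is isomorphic to M21, compatibly with the leg M21 → O1 of μ21, and the pullback of the cospan (v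 : I2 → K̄1, K1 → K̄1) is isomorphic to M21, compatibly with the leg M21 → I2 of μ21; in particular this furnishes monomorphisms a1 : M21 → K1 and a2 : M21 → K2 with (K1 → K̄1) ∘ a1 = v ∘ (M21 → I2) and (K2 → K̄2) ∘ a2 = u ∘ (M21 → O1). -/
open CategoryTheory CategoryTheory.Limits

universe v u

/-- **Compositional concurrent commutativity, part (i).** Given a DPO-admissible
match `μ21 = (I2 ⟵p2— M21 —p1⟶ O1)` of `r2` into `r1` with pushout `N21`, pushout
complements `K̄2` (for `(i2, n2)`) and `K̄1` (for `(o1, n1)`), and monomorphisms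
`u : O1 ⟶ K̄2`, `v : I2 ⟶ K̄1` with `u ≫ w2 = n1` and `v ≫ w1 = n2`, the pullback of
`(u, k2 : K2 ⟶ K̄2)` is `M21` (compatibly with the leg `p1 : M21 ⟶ O1`), and the
pullback of `(v, k1 : K1 ⟶ K̄1)` is `M21` (compatibly with the leg `p2 : M21 ⟶ I2`);
in particular this furnishes monomorphisms `a2 : M21 ⟶ K2` and `a1 : M21 ⟶ K1`. -/
theorem dpo_ccc_part_i
    {𝒞 : Type u} [Category.{v} 𝒞] [Adhesive 𝒞]
    [HasInitial 𝒞] [HasStrictInitialObjects 𝒞] [InitialMonoClass 𝒞]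
    (hfact : HasEpiMonoFact 𝒞) (hfin : Finitary 𝒞)
    (r1 r2 : Rule 𝒞)
    {M21 : 𝒞} (p2 : M21 ⟶ r2.I) (p1 : M21 ⟶ r1.O) [Mono p2] [Mono p1]
    {N21 : 𝒞} (n2 : r2.I ⟶ N21) (n1 : r1.O ⟶ N21) [Mono n2] [Mono n1]
    (hpo : IsPushout p2 p1 n2 n1)
    {K2b : 𝒞} (k2 : r2.K ⟶ K2b) (w2 : K2b ⟶ N21)
    (hpoc2 : IsPushout r2.i k2 n2 w2)
    {K1b : 𝒞} (k1 : r1.K ⟶ K1b) (w1 : K1b ⟶ N21)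
    (hpoc1 : IsPushout r1.o k1 n1 w1)
    (u : r1.O ⟶ K2b) (v : r2.I ⟶ K1b) [Mono u] [Mono v]
    (hu : u ≫ w2 = n1) (hv : v ≫ w1 = n2) :
    (∃ a2 : M21 ⟶ r2.K, Mono a2 ∧ IsPullback p1 a2 u k2) ∧
    (∃ a1 : M21 ⟶ r1.K, Mono a1 ∧ IsPullback p2 a1 v k1) := by
  have := r2.mono_i
  have := r1.mono_o
  have hM := Adhesive.isPullback_of_isPushout_of_mono_left hpo
  have h2 := Adhesive.isPullback_of_isPushout_of_mono_left hpoc2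
  have h1 := Adhesive.isPullback_of_isPushout_of_mono_left hpoc1
  refine ⟨?_, ?_⟩
  · have e : p2 ≫ n2 = (p1 ≫ u) ≫ w2 := by rw [Category.assoc, hu, hpo.w]
    have hi := h2.lift_fst _ _ e
    have hk := h2.lift_snd _ _ e
    refine ⟨h2.lift _ _ e, ?_, ?_⟩
    · exact mono_of_mono_fac hi
    · exact IsPullback.flip (IsPullback.of_right (by rw [hi, hu]; exact hM) hk h2)
  · have e : p1 ≫ n1 = (p2 ≫ v) ≫ w1 := by rw [Category.assoc, hv, hpo.w]
    have hi := h1.lift_fst _ _ e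
    have hk := h1.lift_snd _ _ e
    refine ⟨h1.lift _ _ e, ?_, ?_⟩
    · exact mono_of_mono_fac hi
    · exact IsPullback.flip (IsPullback.of_right (by rw [hi, hv]; exact hM.flip) hk h1)
end

section
/- (Compositional concurrent commutativity, part (ii).) Let C be a category satisfying the stated assumptions, let r1 = (O1 ←o1— K1 —i1→ I1) and r2 = (O2 ←o2— K2 —i2→ I2) be linear rules, and assume μ21 = (I2 ← M21 → O1) is a DPO-admissible match of r2 into r1, with associated pushout N21 (induced morphisms n2 : I2 → N21, n1 : O1 → N21), pushout complements K̄2 (for (i2, n2)) and K̄1 (for (o1, n1)), and assume there exist monomorphisms u : O1 → K̄2 and v : I2 → K̄1 such that (K̄2 → N21) ∘ u = n1 and (K̄1 → N21) ∘ v = n2. Let a1 : M21 → K1 and a2 : M21 → K2 be the monomorphisms obtained from the pullbacks of (v : I2 → K̄1, K1 → K̄1) and (u : O1 → K̄2, K2 → K̄2), respectively (both pullbacks being isomorphic to M21). Then the span μ12 := (I1 ←(i1 ∘ a1)— M21 —(o2 ∘ a2)→ O2) is a DPO-admissible match of r1 into r2. -/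
open CategoryTheory CategoryTheory.Limits

universe v u

/-- **Compositional concurrent commutativity, part (ii).** In the setting of part
(i), with `a2 : M21 ⟶ K2` and `a1 : M21 ⟶ K1` the monomorphisms obtained from the
pullbacks of `(u, k2)` and `(v, k1)` respectively, the span
`μ12 = (I1 ⟵(a1 ≫ i1)— M21 —(a2 ≫ o2)⟶ O2)` is a DPO-admissible match of `r1` into
`r2`: its pushout `N12` has monic cocone legs, the leg `nI1 : I1 ⟶ N12` admits a
pushout complement for `(i1, nI1)`, and the leg `nO2 : O2 ⟶ N12` admits a pushout
complement for `(o2, nO2)`. -/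
theorem dpo_ccc_part_ii
    {𝒞 : Type u} [Category.{v} 𝒞] [Adhesive 𝒞]
    [HasInitial 𝒞] [HasStrictInitialObjects 𝒞] [InitialMonoClass 𝒞]
    (hfact : HasEpiMonoFact 𝒞) (hfin : Finitary 𝒞)
    (r1 r2 : Rule 𝒞)
    {M21 : 𝒞} (p2 : M21 ⟶ r2.I) (p1 : M21 ⟶ r1.O) [Mono p2] [Mono p1]
    {N21 : 𝒞} (n2 : r2.I ⟶ N21) (n1 : r1.O ⟶ N21) [Mono n2] [Mono n1]
    (hpo : IsPushout p2 p1 n2 n1)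
    {K2b : 𝒞} (k2 : r2.K ⟶ K2b) (w2 : K2b ⟶ N21)
    (hpoc2 : IsPushout r2.i k2 n2 w2)
    {K1b : 𝒞} (k1 : r1.K ⟶ K1b) (w1 : K1b ⟶ N21)
    (hpoc1 : IsPushout r1.o k1 n1 w1)
    (u : r1.O ⟶ K2b) (v : r2.I ⟶ K1b) [Mono u] [Mono v]
    (hu : u ≫ w2 = n1) (hv : v ≫ w1 = n2)
    (a2 : M21 ⟶ r2.K) [Mono a2] (ha2 : IsPullback p1 a2 u k2)
    (a1 : M21 ⟶ r1.K) [Mono a1] (ha1 : IsPullback p2 a1 v k1) :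
    ∃ (N12 : 𝒞) (nI1 : r1.I ⟶ N12) (nO2 : r2.O ⟶ N12),
      IsPushout (a1 ≫ r1.i) (a2 ≫ r2.o) nI1 nO2 ∧
      Mono nI1 ∧ Mono nO2 ∧
      (∃ (Kb : 𝒞) (kk : r1.K ⟶ Kb) (ww : Kb ⟶ N12),
        IsPushout r1.i kk nI1 ww) ∧
      (∃ (Kb : 𝒞) (kk : r2.K ⟶ Kb) (ww : Kb ⟶ N12),
        IsPushout r2.o kk nO2 ww) := by
  haveI := r1.mono_i
  haveI := r1.mono_o
  haveI := r2.mono_i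
  haveI := r2.mono_o
  have P : IsPushout (a1 ≫ r1.i) (a2 ≫ r2.o) (pushout.inl _ _) (pushout.inr _ _) :=
    IsPushout.of_hasPushout (a1 ≫ r1.i) (a2 ≫ r2.o)
  have A : IsPushout a1 (a2 ≫ r2.o) (pushout.inl _ _) (pushout.inr _ _) :=
    IsPushout.of_hasPushout a1 (a2 ≫ r2.o)
  have B : IsPushout (a1 ≫ r1.i) a2 (pushout.inl _ _) (pushout.inr _ _) :=
    IsPushout.of_hasPushout (a1 ≫ r1.i) a2
  refine ⟨_, _, _, P, Adhesive.mono_of_isPushout_of_mono_right P,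
    Adhesive.mono_of_isPushout_of_mono_left P, ?_, ?_⟩
  · refine ⟨_, pushout.inl _ _, A.desc (r1.i ≫ pushout.inl _ _) (pushout.inr _ _) ?_, ?_⟩
    · simpa using P.w
    · exact IsPushout.of_left (by simpa using P) (by simp) A
  · refine ⟨_, pushout.inr _ _, B.desc (pushout.inl _ _) (r2.o ≫ pushout.inr _ _) ?_, ?_⟩
    · simpa using P.w
    · exact (IsPushout.of_top (by simpa using P) (by simp) B).flip
end

section
/- (Compositional concurrent commutativity, part (iii), order reversal.) Let C be a category satisfying the stated assumptions, let r1 = (O1 ←o1— K1 —i1→ I1) and r2 = (O2 ←o2— K2 —i2→ I2) be linear rules, and assume μ21 = (I2 ← M21 → O1) is a DPO-admissible match of r2 into r1, with associated pushout N21 (induced morphisms n2 : I2 → N21, n1 : O1 → N21), pushout complements K̄2 (for (i2, n2)) and K̄1 (for (o1, n1)), and assume there exist monomorphisms u : O1 → K̄2 and v : I2 → K̄1 such that (K̄2 → N21) ∘ u = n1 and (K̄1 → N21) ∘ v = n2. Let a1 : M21 → K1 and a2 : M21 → K2 be the monomorphisms obtained from the pullbacks of (v : I2 → K̄1, K1 →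 K̄1) and (u : O1 → K̄2, K2 → K̄2), respectively, and let μ12 := (I1 ←(i1 ∘ a1)— M21 —(o2 ∘ a2)→ O2), which is a DPO-admissible match of r1 into r2. Then the composite rules r2 ▷[μ21] r1 and r1 ▷[μ12] r2 are isomorphic as spans. -/
open CategoryTheory CategoryTheory.Limits

universe v u

theorem po_ext {𝒞 : Type u} [Category.{v} 𝒞] {M A B P C Q : 𝒞}
    {a : M ⟶ A} {b : M ⟶ B} {x : A ⟶ P} {y : B ⟶ P} {h : A ⟶ C} {m : C ⟶ Q} {n : B ⟶ Q}
    (t : IsPushout a b x y) (s : IsPushout (a ≫ h) b m n) :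
    ∃ w : P ⟶ Q, x ≫ w = h ≫ m ∧ y ≫ w = n ∧ IsPushout h x m w :=
  ⟨_, t.inl_desc _ _ _, t.inr_desc _ _ _, IsPushout.of_left' s t⟩

theorem po_restrict_s14 {𝒞 : Type u} [Category.{v} 𝒞] [Adhesive 𝒞] {M A B N D A' : 𝒞}
    {p : M ⟶ A} {q : M ⟶ B} {h : A ⟶ N} {i : B ⟶ N} [Mono p]
    (H : IsPushout p q h i) {w : D ⟶ N} [Mono w] {s : A' ⟶ A} {t : A' ⟶ D}
    (pb : IsPullback s t h w) {u : B ⟶ D} (hu : u ≫ w = i)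
    {a : M ⟶ A'} (ha : a ≫ s = p) : IsPushout a q t u := by
  have hs : Mono s := ⟨fun f g e => pb.hom_ext e (by
    rw [← cancel_mono w]
    simp only [Category.assoc, ← pb.w]
    rw [← Category.assoc, e, Category.assoc])⟩
  refine ((Adhesive.van_kampen H) a q t u (𝟙 _) s (𝟙 _) w ?_ ?_ ⟨pb.w.symm⟩ ⟨by simp [hu]⟩
    ⟨?_⟩).2 ⟨pb.flip, ?_⟩
  · refine ⟨⟨by simp [ha]⟩, ⟨PullbackCone.IsLimit.mk _ (fun c => c.snd) ?_ ?_ ?_⟩⟩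
    · intro c
      rw [← cancel_mono s, Category.assoc, ha, c.condition]
    · intro c; simp
    · intro c m _ h2; simpa using h2
  · exact IsPullback.of_vert_isIso ⟨by simp⟩
  · rw [← cancel_mono w, Category.assoc, Category.assoc, hu, ← pb.w, ← H.w, ← ha, Category.assoc]
  · refine ⟨⟨by simp [hu]⟩, ⟨PullbackCone.IsLimit.mk _ (fun c => c.snd) ?_ ?_ ?_⟩⟩
    · intro c
      rw [← cancel_mono w, Category.assoc, hu, c.condition]
    · intro c; simp
    · intro c m _ h2; simpa using h2

/-- **Compositional concurrent commutativity, part (iii): order reversal.** In the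
setting of parts (i)–(ii), with `μ12 = (I1 ⟵(a1 ≫ i1)— M21 —(a2 ≫ o2)⟶ O2)` the
induced DPO-admissible match of `r1` into `r2`, the composite rules `r2 ▷[μ21] r1`
and `r1 ▷[μ12] r2` are isomorphic as spans. -/
theorem dpo_ccc_part_iii_order_reversal
    {𝒞 : Type u} [Category.{v} 𝒞] [Adhesive 𝒞]
    [HasInitial 𝒞] [HasStrictInitialObjects 𝒞] [InitialMonoClass 𝒞]
    (hfact : HasEpiMonoFact 𝒞) (hfin : Finitary 𝒞)
    (r1 r2 : Rule 𝒞)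
    {M21 : 𝒞} {p2 : M21 ⟶ r2.I} {p1 : M21 ⟶ r1.O}
    (c21 : CompData r2 r1 M21 p2 p1)
    (u : r1.O ⟶ c21.K2b) (v : r2.I ⟶ c21.K1b) [Mono u] [Mono v]
    (hu : u ≫ c21.w2 = c21.n1) (hv : v ≫ c21.w1 = c21.n2)
    (a2 : M21 ⟶ r2.K) [Mono a2] (ha2 : IsPullback p1 a2 u c21.k2)
    (a1 : M21 ⟶ r1.K) [Mono a1] (ha1 : IsPullback p2 a1 v c21.k1) :
    ∃ c12 : CompData r1 r2 M21 (a1 ≫ r1.i) (a2 ≫ r2.o),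
      RuleIso c12.rule c21.rule := by
  have := r1.mono_o
  have := r1.mono_i
  have := r2.mono_o
  have := r2.mono_i
  obtain ⟨_, _, N, n2, n1, poN, _, _, K2b, k2, w2, poc2, O21, c2, v2, poO, K1b, k1, w1, poc1,
    I21, c1, v1, poI, K21, q2, q1, pbK, mol, mil⟩ := c21
  dsimp only at u v hu hv ha2 ha1
  have hw2 : Mono w2 := Adhesive.mono_of_isPushout_of_mono_left poc2
  have hw1 : Mono w1 := Adhesive.mono_of_isPushout_of_mono_left poc1
  have e2 : a2 ≫ r2.i = p2 := by
    rw [← cancel_mono n2, Category.assoc, poc2.w, ← Category.assoc, ← ha2.w, Category.assoc, hu,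
      poN.w]
  have e1 : a1 ≫ r1.o = p1 := by
    rw [← cancel_mono n1, Category.assoc, poc1.w, ← Category.assoc, ← ha1.w, Category.assoc, hv,
      poN.w]
  have A2 : IsPushout a2 p1 k2 u :=
    po_restrict_s14 poN (Adhesive.isPullback_of_isPushout_of_mono_left poc2) hu e2
  have A1 : IsPushout a1 p2 k1 v :=
    po_restrict_s14 poN.flip (Adhesive.isPullback_of_isPushout_of_mono_left poc1) hv e1
  have hq1 : Mono q1 := ⟨fun f g e => pbK.hom_ext (by
    rw [← cancel_mono w2]
    simp only [Category.assoc, pbK.w]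
    rw [← Category.assoc, e, Category.assoc]) e⟩
  obtain ⟨j1, hj12, hj11⟩ : ∃ j1 : r1.K ⟶ K21, j1 ≫ q2 = r1.o ≫ u ∧ j1 ≫ q1 = k1 :=
    ⟨pbK.lift (r1.o ≫ u) k1 (by rw [Category.assoc, hu, poc1.w]), pbK.lift_fst _ _ _,
      pbK.lift_snd _ _ _⟩
  obtain ⟨j2, hj22, hj21⟩ : ∃ j2 : r2.K ⟶ K21, j2 ≫ q2 = k2 ∧ j2 ≫ q1 = r2.i ≫ v :=
    ⟨pbK.lift k2 (r2.i ≫ v) (by rw [Category.assoc, hv, poc2.w]), pbK.lift_fst _ _ _,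
      pbK.lift_snd _ _ _⟩
  have pb2 : IsPullback r2.i j2 v q1 := by
    refine (IsPullback.of_right (h₁₂ := q2) (h₂₂ := w1) (v₁₃ := w2) ?_ hj21 pbK).flip
    rw [hj22, hv]
    exact (Adhesive.isPullback_of_isPushout_of_mono_left poc2).flip
  have B : IsPushout a2 a1 j2 j1 := po_restrict_s14 A1.flip pb2 hj11 e2
  -- outer pushouts
  have SO : IsPushout (a1 ≫ r1.o) (a2 ≫ r2.o) (u ≫ v2) c2 := by
    rw [e1]; exact A2.flip.paste_vert poO.flip
  have SI : IsPushout (a2 ≫ r2.i) (a1 ≫ r1.i) (v ≫ v1) c1 := by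
    rw [e2]; exact A1.flip.paste_vert poI.flip
  have PN := IsPushout.of_hasPushout (a1 ≫ r1.i) (a2 ≫ r2.o)
  have P2 := IsPushout.of_hasPushout a1 (a2 ≫ r2.o)
  have P1 := IsPushout.of_hasPushout a2 (a1 ≫ r1.i)
  generalize pushout.inl (a1 ≫ r1.i) (a2 ≫ r2.o) = n2' at PN
  generalize pushout.inr (a1 ≫ r1.i) (a2 ≫ r2.o) = n1' at PN
  generalize pushout.inl a1 (a2 ≫ r2.o) = k2' at P2
  generalize pushout.inr a1 (a2 ≫ r2.o) = y2 at P2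
  generalize pushout.inl a2 (a1 ≫ r1.i) = k1' at P1
  generalize pushout.inr a2 (a1 ≫ r1.i) = y1 at P1
  obtain ⟨w2', hw2a, hw2b, poc2'⟩ := po_ext P2 PN
  obtain ⟨v2', hv2a, hv2b, poO'⟩ := po_ext P2 SO
  obtain ⟨w1', hw1a, hw1b, poc1'⟩ := po_ext P1 PN.flip
  obtain ⟨v1', hv1a, hv1b, poI'⟩ := po_ext P1 SI
  obtain ⟨q2', hq2a, hq2b, Q2⟩ := po_ext B P2.flip
  obtain ⟨q1', hq1a, hq1b, Q1⟩ := po_ext B.flip P1.flip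
  have hq2' : Mono q2' := Adhesive.mono_of_isPushout_of_mono_left Q2
  have comm : q2' ≫ w2' = q1' ≫ w1' := by
    apply B.hom_ext
    · rw [reassoc_of% hq2a, reassoc_of% hq1b, hw2b, hw1a]
    · rw [reassoc_of% hq2b, reassoc_of% hq1a, hw1b, hw2a]
  have PK : IsPushout q2' q1' w2' w1' := by
    refine IsPushout.of_top ?_ comm Q2
    rw [hq1b, hw2b]
    exact poc1'
  have lo : q2' ≫ v2' = q2 ≫ v2 := by
    apply B.hom_ext
    · rw [reassoc_of% hq2a, reassoc_of% hj22, hv2b, poO.w]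
    · rw [reassoc_of% hq2b, reassoc_of% hj12, hv2a]
  have li : q1' ≫ v1' = q1 ≫ v1 := by
    apply B.hom_ext
    · rw [reassoc_of% hq1b, reassoc_of% hj21, hv1a]
    · rw [reassoc_of% hq1a, reassoc_of% hj11, hv1b, poI.w]
  refine ⟨⟨mono_comp _ _, mono_comp _ _, _, n2', n1', PN,
    Adhesive.mono_of_isPushout_of_mono_right PN, Adhesive.mono_of_isPushout_of_mono_left PN,
    _, k2', w2', poc2', O21, u ≫ v2, v2', poO', _, k1', w1', poc1', I21, v ≫ v1, v1', poI',
    K21, q2', q1', Adhesive.isPullback_of_isPushout_of_mono_left PK, lo ▸ mol, li ▸ mil⟩,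
    Iso.refl _, Iso.refl _, Iso.refl _, ?_, ?_⟩
  · simpa [CompData.rule] using lo
  · simpa [CompData.rule] using li
end

section
/- (Compositional concurrent commutativity, part (iii), coincidence of SqPO and DPO composition under independence.) Let C be a category satisfying the stated assumptions, let r1 = (O1 ←o1— K1 —i1→ I1) and r2 = (O2 ←o2— K2 —i2→ I2) be linear rules, and assume μ21 = (I2 ← M21 → O1) is a DPO-admissible match of r2 into r1, with associated pushout N21 (induced morphisms n2 : I2 → N21, n1 : O1 → N21), pushout complements K̄2 (for (i2, n2)) and K̄1 (for (o1, n1)), and assume there exist monomorphisms u : O1 → K̄2 and v : I2 → K̄1 such that (K̄2 → N21) ∘ u = n1 and (K̄1 → N21) ∘ v = n2. Then the pushout-complement square for (i2, n2), i.e. the pair (K2 → K̄2, K̄2 → N21), is a final pullback complement of (n2 : I2 → N21, i2 : K2 → I2); consequently the SqPO composite of r2 with r1 along μ21 (defined like the DPO composite except that K̄2 is constructed as a final pullback complement of (n2, i2) instead of a pushout complement) is isomorphic as a span to the DPO composite r2 ▷[μ21] r1. -/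
open CategoryTheory CategoryTheory.Limits

universe v u

/-- The data of the SqPO composite of `r2` with `r1` along the span
`μ21 = (I2 ⟵p2— M —p1⟶ O1)`: defined exactly like the DPO composite, except that
the square over `K̄2` is constructed as a final pullback complement of `(n2, i2)`
instead of a pushout complement. -/
structure SqPOCompData {𝒞 : Type u} [Category.{v} 𝒞] (r2 r1 : Rule 𝒞)
    (M : 𝒞) (p2 : M ⟶ r2.I) (p1 : M ⟶ r1.O) where
  mono_p2 : Mono p2
  mono_p1 : Mono p1
  N : 𝒞
  n2 : r2.I ⟶ N
  n1 : r1.O ⟶ N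
  poN : IsPushout p2 p1 n2 n1
  mono_n2 : Mono n2
  mono_n1 : Mono n1
  K2b : 𝒞
  k2 : r2.K ⟶ K2b
  w2 : K2b ⟶ N
  fpc2 : IsFPC r2.i n2 k2 w2
  O21 : 𝒞
  c2 : r2.O ⟶ O21
  v2 : K2b ⟶ O21
  poO : IsPushout r2.o k2 c2 v2
  K1b : 𝒞
  k1 : r1.K ⟶ K1b
  w1 : K1b ⟶ N
  poc1 : IsPushout r1.o k1 n1 w1
  I21 : 𝒞
  c1 : r1.I ⟶ I21
  v1 : K1b ⟶ I21
  poI : IsPushout r1.i k1 c1 v1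
  K21 : 𝒞
  q2 : K21 ⟶ K2b
  q1 : K21 ⟶ K1b
  pbK : IsPullback q2 q1 w2 w1
  mono_oleg : Mono (q2 ≫ v2)
  mono_ileg : Mono (q1 ≫ v1)

/-- The SqPO composite rule extracted from SqPO composition data. -/
def SqPOCompData.rule {𝒞 : Type u} [Category.{v} 𝒞] {r2 r1 : Rule 𝒞}
    {M : 𝒞} {p2 : M ⟶ r2.I} {p1 : M ⟶ r1.O}
    (cd : SqPOCompData r2 r1 M p2 p1) : Rule 𝒞 :=
  ⟨cd.O21, cd.K21, cd.I21, cd.q2 ≫ cd.v2, cd.q1 ≫ cd.v1, cd.mono_oleg, cd.mono_ileg⟩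

theorem isFPC_of_isPushout {𝒞 : Type u} [Category.{v} 𝒞] [Adhesive 𝒞] {A B D X : 𝒞}
    {a : A ⟶ B} {c : B ⟶ X} {b : A ⟶ D} {d : D ⟶ X} [Mono a]
    (h : IsPushout a b c d) : IsFPC a c b d := by
  have hpb := Adhesive.isPullback_of_isPushout_of_mono_left h
  have hd : Mono d := Adhesive.mono_of_isPushout_of_mono_left h
  refine ⟨hpb, ?_⟩
  intro P W x y z hP w hw
  have hD := IsPullback.of_hasPullback d z
  -- the top square of the cube
  have hAw : IsPullback (𝟙 P) w x a := by
    refine ⟨⟨by simp [hw]⟩, ⟨PullbackCone.IsLimit.mk _ (fun s => s.fst) ?_ ?_ ?_⟩⟩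
    · intro s; simp
    · intro s
      rw [← cancel_mono a, Category.assoc, hw, s.condition]
    · intro s m h1 _
      simpa using h1
  let t : P ⟶ pullback d z := hD.lift (w ≫ b) y (by
    rw [Category.assoc, ← h.w, reassoc_of% hw, hP.w])
  have ht1 : t ≫ pullback.fst d z = w ≫ b := hD.lift_fst _ _ _
  have ht2 : t ≫ pullback.snd d z = y := hD.lift_snd _ _ _
  have hback : IsPullback t w (pullback.fst d z) b := by
    have h1 : IsPullback (𝟙 P ≫ y) w z (a ≫ c) := hAw.paste_horiz hP.flip
    rw [h.w] at h1
    have h2 : IsPullback (t ≫ pullback.snd d z) w z (b ≫ d) := by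
      simpa [ht2] using h1
    exact IsPullback.of_right h2 ht1 hD.flip
  have hVK := Adhesive.van_kampen h
  have hpo : IsPushout (𝟙 P) t y (pullback.snd d z) :=
    (hVK (𝟙 P) t y (pullback.snd d z) w x (pullback.fst d z) z hAw hback
      ⟨hP.w.symm⟩ ⟨hD.w.symm⟩ ⟨by simp [ht2]⟩).2 ⟨hP.flip, hD.flip⟩
  have : IsIso (pullback.snd d z) := hpo.isIso_inr_of_isIso
  refine ⟨inv (pullback.snd d z) ≫ pullback.fst d z, ⟨?_, ?_⟩, ?_⟩
  · simp [hD.w]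
  · rw [← cancel_mono d]
    simp [hD.w, ← h.w, reassoc_of% hw, hP.w]
  · intro ws h1
    rw [← cancel_mono d, h1.1]
    simp [hD.w]

theorem IsFPC.exists_iso {𝒞 : Type u} [Category.{v} 𝒞] {A B D X D' X' : 𝒞}
    {a : A ⟶ B} {c : B ⟶ X} {b : A ⟶ D} {d : D ⟶ X}
    {c' : B ⟶ X'} {b' : A ⟶ D'} {d' : D' ⟶ X'}
    (h : IsFPC a c b d) (h' : IsFPC a c' b' d') (e : X ≅ X') (he : c ≫ e.hom = c') :
    ∃ φ : D ≅ D', b ≫ φ.hom = b' ∧ φ.hom ≫ d' = d ≫ e.hom := by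
  have p1 : IsPullback a b c' (d ≫ e.hom) := by
    refine h.1.of_iso (Iso.refl _) (Iso.refl _) (Iso.refl _) e ?_ ?_ ?_ ?_ <;> simp [he]
  have p2 : IsPullback a b' c (d' ≫ e.inv) := by
    refine h'.1.of_iso (Iso.refl _) (Iso.refl _) (Iso.refl _) e.symm ?_ ?_ ?_ ?_ <;> simp [← he]
  obtain ⟨f, ⟨hf1, hf2⟩, -⟩ := h'.2 a b _ p1 (𝟙 _) (by simp)
  obtain ⟨g, ⟨hg1, hg2⟩, -⟩ := h.2 a b' _ p2 (𝟙 _) (by simp)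
  simp only [Category.id_comp] at hf2 hg2
  refine ⟨⟨f, g, ?_, ?_⟩, hf2, hf1⟩
  · refine (h.2 a b d h.1 (𝟙 _) (by simp)).unique ⟨?_, ?_⟩ ⟨?_, ?_⟩
    · simp [hg1, reassoc_of% hf1]
    · simp [hg2, reassoc_of% hf2]
    · simp
    · simp
  · refine (h'.2 a b' d' h'.1 (𝟙 _) (by simp)).unique ⟨?_, ?_⟩ ⟨?_, ?_⟩
    · simp [hf1, reassoc_of% hg1]
    · simp [hf2, reassoc_of% hg2]
    · simp
    · simp

theorem pushout_iso_aux {𝒞 : Type u} [Category.{v} 𝒞] {K O D Y D' Y' : 𝒞}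
    {o : K ⟶ O} {k : K ⟶ D} {c : O ⟶ Y} {w : D ⟶ Y}
    {k' : K ⟶ D'} {c' : O ⟶ Y'} {w' : D' ⟶ Y'}
    (h : IsPushout o k c w) (h' : IsPushout o k' c' w') (e : D ≅ D') (he : k ≫ e.hom = k') :
    ∃ φ : Y ≅ Y', c ≫ φ.hom = c' ∧ w ≫ φ.hom = e.hom ≫ w' := by
  have h2 : IsPushout o k c' (e.hom ≫ w') := by
    refine h'.of_iso (Iso.refl _) (Iso.refl _) e.symm (Iso.refl _) ?_ ?_ ?_ ?_ <;> simp [← he]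
  exact ⟨h.isoIsPushout _ _ h2, by simp, by simp⟩

theorem pullback_iso_aux {𝒞 : Type u} [Category.{v} 𝒞] {P A B X P' A' B' X' : 𝒞}
    {q : P ⟶ A} {s : P ⟶ B} {f : A ⟶ X} {g : B ⟶ X}
    {q' : P' ⟶ A'} {s' : P' ⟶ B'} {f' : A' ⟶ X'} {g' : B' ⟶ X'}
    (h : IsPullback q s f g) (h' : IsPullback q' s' f' g')
    (eA : A ≅ A') (eB : B ≅ B') (e : X ≅ X')
    (hA : eA.hom ≫ f' = f ≫ e.hom) (hB : eB.hom ≫ g' = g ≫ e.hom) :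
    ∃ φ : P ≅ P', φ.hom ≫ q' = q ≫ eA.hom ∧ φ.hom ≫ s' = s ≫ eB.hom := by
  have h2 : IsPullback (q ≫ eA.hom) (s ≫ eB.hom) f' g' := by
    refine h.of_iso (Iso.refl _) eA eB e ?_ ?_ ?_ ?_ <;> simp [hA, hB]
  exact ⟨h2.isoIsPullback _ _ h', by simp, by simp⟩

/-- **Compositional concurrent commutativity, part (iii): coincidence of SqPO and
DPO composition under sequential independence.** In the setting of compositional
sequential independence (monomorphisms `u`, `v` as below), the pushout-complement
square `(k2, w2)` for `(i2, n2)` is a final pullback complement of `(n2, i2)`;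
consequently every SqPO composite of `r2` with `r1` along `μ21` is isomorphic as a
span to the DPO composite `r2 ▷[μ21] r1`. -/
theorem dpo_ccc_part_iii_sqpo_coincidence
    {𝒞 : Type u} [Category.{v} 𝒞] [Adhesive 𝒞]
    [HasInitial 𝒞] [HasStrictInitialObjects 𝒞] [InitialMonoClass 𝒞]
    (hfact : HasEpiMonoFact 𝒞) (hfin : Finitary 𝒞)
    (r1 r2 : Rule 𝒞)
    {M21 : 𝒞} {p2 : M21 ⟶ r2.I} {p1 : M21 ⟶ r1.O}
    (c21 : CompData r2 r1 M21 p2 p1)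
    (u : r1.O ⟶ c21.K2b) (v : r2.I ⟶ c21.K1b) [Mono u] [Mono v]
    (hu : u ≫ c21.w2 = c21.n1) (hv : v ≫ c21.w1 = c21.n2) :
    IsFPC r2.i c21.n2 c21.k2 c21.w2 ∧
      ∀ csq : SqPOCompData r2 r1 M21 p2 p1, RuleIso csq.rule c21.rule := by
  have := r2.mono_i
  have := r1.mono_o
  have hF := isFPC_of_isPushout c21.poc2
  refine ⟨hF, fun csq => ?_⟩
  let e : csq.N ≅ c21.N := csq.poN.isoIsPushout _ _ c21.poN
  have e2 : csq.n2 ≫ e.hom = c21.n2 := by simp [e]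
  have e1 : csq.n1 ≫ e.hom = c21.n1 := by simp [e]
  obtain ⟨f2, hf2, hf2'⟩ := csq.fpc2.exists_iso hF e e2
  obtain ⟨f1, hf1, hf1'⟩ := (isFPC_of_isPushout csq.poc1).exists_iso
    (isFPC_of_isPushout c21.poc1) e e1
  obtain ⟨gO, -, hgO⟩ := pushout_iso_aux csq.poO c21.poO f2 hf2
  obtain ⟨gI, -, hgI⟩ := pushout_iso_aux csq.poI c21.poI f1 hf1
  obtain ⟨gK, hK2, hK1⟩ := pullback_iso_aux csq.pbK c21.pbK f2 f1 e hf2' hf1'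
  refine ⟨gO, gK, gI, ?_, ?_⟩
  · change (csq.q2 ≫ csq.v2) ≫ gO.hom = gK.hom ≫ c21.q2 ≫ c21.v2
    rw [reassoc_of% hK2, Category.assoc, hgO]
  · change (csq.q1 ≫ csq.v1) ≫ gI.hom = gK.hom ≫ c21.q1 ≫ c21.v1
    rw [reassoc_of% hK1, Category.assoc, hgI]
end

section
/- (Amalgamation of sequentially independent rule compositions.) Let C be a category satisfying the stated assumptions, let r1 = (O1 ←o1— K1 —i1→ I1) and r2 = (O2 ←o2— K2 —i2→ I2) be linear rules, and assume μ21 = (I2 ← M21 → O1) is a DPO-admissible match of r2 into r1, with associated pushout N21 (induced morphisms n2 : I2 → N21, n1 : O1 → N21), pushout complements K̄2 (for (i2, n2)) and K̄1 (for (o1, n1)), and assume there exist monomorphisms u : O1 → K̄2 and v : I2 → K̄1 such that (K̄2 → N21) ∘ u = n1 and (K̄1 → N21) ∘ v = n2. Let a1 : M21 → K1 and a2 : M21 → K2 be the monomorphisms obtained from the pullbacks of (v : I2 → K̄1, K1 → K̄1) and (u : O1 → K̄2, K2 → K̄2), respectively. Then, writing O21, I21 for the output and input objects and K21 for the pullback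 object of the DPO composite r2 ▷[μ21] r1: O21 is a pushout of the span (O2 ←(o2 ∘ a2)— M21 → O1), K21 is a pushout of the span (K2 ←a2— M21 —a1→ K1), and I21 is a pushout of the span (I2 ← M21 —(i1 ∘ a1)→ I1), each up to isomorphism compatible with the canonical morphisms. -/
open CategoryTheory CategoryTheory.Limits

universe v u

theorem dpo_aux_mono_pb {𝒞 : Type u} [Category.{v} 𝒞] {A B C : 𝒞} (f : A ⟶ B) (g : B ⟶ C)
    [Mono g] (h : A ⟶ C) (e : f ≫ g = h) : IsPullback (𝟙 A) f h g := by
  subst e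
  refine ⟨⟨by simp⟩, ⟨PullbackCone.IsLimit.mk _ (fun s => s.fst) (fun s => by simp) (fun s => ?_)
    (fun s m h1 _ => by simpa using h1)⟩⟩
  rw [← cancel_mono g]
  simpa using s.condition

theorem dpo_aux_po {𝒞 : Type u} [Category.{v} 𝒞] [Adhesive 𝒞] {M K I O D N : 𝒞}
    {p2 : M ⟶ I} {p1 : M ⟶ O} {n2 : I ⟶ N} {n1 : O ⟶ N} [Mono p2]
    (hN : IsPushout p2 p1 n2 n1)
    {i : K ⟶ I} {k : K ⟶ D} {w : D ⟶ N} [Mono i] [Mono n2] (hw : IsPushout i k n2 w)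
    (a : M ⟶ K) (x : O ⟶ D) (hx : x ≫ w = n1) (ha : p1 ≫ x = a ≫ k) :
    a ≫ i = p2 ∧ IsPushout a p1 k x := by
  have hmw : Mono w := Adhesive.mono_of_isPushout_of_mono_left hw
  have e : a ≫ i = p2 := by
    rw [← cancel_mono n2, Category.assoc, hw.w, ← Category.assoc, ← ha, Category.assoc, hx, hN.w]
  refine ⟨e, ?_⟩
  exact (((Adhesive.van_kampen hN) a p1 k x (𝟙 M) i (𝟙 O) w
    (dpo_aux_mono_pb a i p2 e).flip (IsPullback.of_vert_isIso ⟨by simp⟩) ⟨hw.w.symm⟩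
    ⟨by simp [hx]⟩ ⟨ha.symm⟩).mpr
    ⟨(Adhesive.isPullback_of_isPushout_of_mono_left hw).flip,
     (dpo_aux_mono_pb x w n1 hx).flip⟩)

/-- **Amalgamation of sequentially independent rule compositions.** In the setting
of compositional sequential independence (monomorphisms `u : O1 ⟶ K̄2`,
`v : I2 ⟶ K̄1` with `u ≫ w2 = n1`, `v ≫ w1 = n2`, and induced monomorphisms
`a2 : M21 ⟶ K2`, `a1 : M21 ⟶ K1`), the objects of the DPO composite
`r2 ▷[μ21] r1` are amalgamated pushouts: `O21` is the pushout of
`(O2 ⟵(a2 ≫ o2)— M21 —p1⟶ O1)` with canonical cocone `(c2, u ≫ v2)`; `K21` is the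
pushout of `(K2 ⟵a2— M21 —a1⟶ K1)` with cocone given by the canonically induced
morphisms `b2 : K2 ⟶ K21` and `b1 : K1 ⟶ K21`; and `I21` is the pushout of
`(I2 ⟵p2— M21 —(a1 ≫ i1)⟶ I1)` with canonical cocone `(v ≫ v1, c1)`. -/
theorem dpo_amalgamation_of_independent_composition
    {𝒞 : Type u} [Category.{v} 𝒞] [Adhesive 𝒞]
    [HasInitial 𝒞] [HasStrictInitialObjects 𝒞] [InitialMonoClass 𝒞]
    (hfact : HasEpiMonoFact 𝒞) (hfin : Finitary 𝒞)
    (r1 r2 : Rule 𝒞)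
    {M21 : 𝒞} {p2 : M21 ⟶ r2.I} {p1 : M21 ⟶ r1.O}
    (c21 : CompData r2 r1 M21 p2 p1)
    (u : r1.O ⟶ c21.K2b) (v : r2.I ⟶ c21.K1b) [Mono u] [Mono v]
    (hu : u ≫ c21.w2 = c21.n1) (hv : v ≫ c21.w1 = c21.n2)
    (a2 : M21 ⟶ r2.K) [Mono a2] (ha2 : IsPullback p1 a2 u c21.k2)
    (a1 : M21 ⟶ r1.K) [Mono a1] (ha1 : IsPullback p2 a1 v c21.k1) :
    IsPushout (a2 ≫ r2.o) p1 c21.c2 (u ≫ c21.v2) ∧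
    (∃ (b2 : r2.K ⟶ c21.K21) (b1 : r1.K ⟶ c21.K21),
      b2 ≫ c21.q2 = c21.k2 ∧ b2 ≫ c21.q1 = r2.i ≫ v ∧
      b1 ≫ c21.q2 = r1.o ≫ u ∧ b1 ≫ c21.q1 = c21.k1 ∧
      IsPushout a2 a1 b2 b1) ∧
    IsPushout p2 (a1 ≫ r1.i) (v ≫ c21.v1) c21.c1 := by
  obtain ⟨mp2, mp1, N, n2, n1, poN, mn2, mn1, K2b, k2, w2, poc2, O21, c2, v2, poO, K1b, k1, w1,
    poc1, I21, c1, v1, poI, K21, q2, q1, pbK, mo, mi⟩ := c21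
  dsimp only at *
  have := r1.mono_o
  have := r2.mono_i
  obtain ⟨e2, h2⟩ := dpo_aux_po poN poc2 a2 u hu ha2.w
  obtain ⟨e1, h1⟩ := dpo_aux_po poN.flip poc1 a1 v hv ha1.w
  have mw1 : Mono w1 := Adhesive.mono_of_isPushout_of_mono_left poc1
  have mq2 : Mono q2 := ⟨fun f g h => pbK.hom_ext h (by
    rw [← cancel_mono w1, Category.assoc, Category.assoc, ← pbK.w, reassoc_of% h])⟩
  refine ⟨?_, ?_, ?_⟩
  · exact h2.paste_horiz poO
  · obtain ⟨b2, hb2, hb2'⟩ := pbK.exists_lift k2 (r2.i ≫ v) (by rw [Category.assoc, hv, poc2.w])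
    obtain ⟨b1, hb1, hb1'⟩ := pbK.exists_lift (r1.o ≫ u) k1 (by rw [Category.assoc, hu, poc1.w])
    refine ⟨b2, b1, hb2, hb2', hb1, hb1', ?_⟩
    have P : IsPullback b1 r1.o q2 u := by
      have Q : IsPullback (b1 ≫ q1) r1.o w1 (u ≫ w2) := by
        rw [hb1', hu]
        exact (Adhesive.isPullback_of_isPushout_of_mono_left poc1).flip
      exact IsPullback.of_right Q hb1 pbK.flip
    exact (Adhesive.van_kampen h2 a2 a1 b2 b1 (𝟙 M21) (𝟙 _) r1.o q2
      (IsPullback.of_vert_isIso ⟨by simp⟩) (dpo_aux_mono_pb a1 r1.o p1 e1).flip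
      ⟨by simp [hb2]⟩ ⟨hb1⟩ ⟨pbK.hom_ext (by simp [hb1, hb2, ← ha2.w, ← e1])
        (by simp [hb1', hb2', ← ha1.w, ← e2])⟩).mpr
      ⟨(dpo_aux_mono_pb b2 q2 k2 hb2).flip, P⟩
  · exact h1.flip.paste_vert poI.flip
end
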